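/- Let $d\ge 5$ and let $\psi\in\mathcal{S}(\mathbb{R}^d)$ be a Schwartz function with $1_{Q}\le\widetilde{\psi}\le 1_{2Q}$, $Q=[-1/2,1/2]^d$. For $k\in\mathbb{N}$ let $J_k=\lfloor\log_2 k\rfloor-2$, $\Psi_{j,k}=\psi_{q_j,2^{k-j}}$, and $M_k f=\sup_{2^k\le\lambda\le 2^{k+1},\ \lambda^2\in\mathbb{N}}|A_\lambda f|$. Then there is a constant $C$ (depending on $d$ and $\psi$) such that for all $f\in\ell^2(\mathbb{Z}^d)$, $\bigl\|\sup_{k\ge 8} M_k\bigl(f-f*\Psi_{J_k,k}\bigr)\bigr\|_{\ell^2(\mathbb{Z}^d)}\le C\,\|f\|_{\ell^2(\mathbb{Z}^d)}$. -/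

import Mathlib

open scoped BigOperators ENNReal Real

noncomputable section

/-- Squared Euclidean norm of a lattice point, as a real number. -/
def nsq {d : ℕ} (m : Fin d → ℤ) : ℝ := ∑ i, ((m i : ℝ)) ^ 2

/-- The discrete sphere of radius `lam` in `ℤ^d`. -/
def sph (d : ℕ) (lam : ℝ) : Set (Fin d → ℤ) := {m | nsq m = lam ^ 2}

/-- `N_lam`: the number of lattice points on the sphere of radius `lam`. -/
def Nlam (d : ℕ) (lam : ℝ) : ℕ := Nat.card (sph d lam)

/-- The discrete spherical average. -/
def Avg {d : ℕ} (lam : ℝ) (f : (Fin d → ℤ) → ℝ) (n : Fin d → ℤ) : ℝ :=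
  (Nlam d lam : ℝ)⁻¹ * ∑' m : sph d lam, f (n - (m : Fin d → ℤ))

/-- The `ℓ²(ℤ^d)` norm, valued in `ℝ≥0∞`. -/
def l2norm {d : ℕ} (f : (Fin d → ℤ) → ℝ) : ℝ≥0∞ :=
  (∑' n : Fin d → ℤ, (‖f n‖₊ : ℝ≥0∞) ^ 2) ^ ((1 : ℝ) / 2)

/-- The dyadic-scale maximal operator `M_k f = sup_{2^k ≤ λ ≤ 2^{k+1}, λ²∈ℕ} |A_λ f|`,
valued in `ℝ≥0∞`. -/
def Mk {d : ℕ} (k : ℕ) (f : (Fin d → ℤ) → ℝ) (n : Fin d → ℤ) : ℝ≥0∞ :=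
  ⨆ (lam : ℝ) (_ : (2 : ℝ) ^ k ≤ lam ∧ lam ≤ (2 : ℝ) ^ (k + 1) ∧
      ∃ N : ℕ, (N : ℝ) = lam ^ 2),
    (‖Avg lam f n‖₊ : ℝ≥0∞)

/-- Convolution on `ℤ^d`. -/
def conv {d : ℕ} (f g : (Fin d → ℤ) → ℝ) (n : Fin d → ℤ) : ℝ :=
  ∑' m : Fin d → ℤ, f (n - m) * g m

/-- The Fourier transform on `ℝ^d` with kernel `e^{-2πi x·ξ}`. -/
def ftR {d : ℕ} (ψ : (Fin d → ℝ) → ℝ) (ξ : Fin d → ℝ) : ℂ :=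
  ∫ x : Fin d → ℝ, (ψ x : ℂ) * Complex.exp (-(2 * (π : ℂ) * Complex.I) * (∑ i, x i * ξ i))

/-- The sampling function `ψ_{q,L}(m) = (q/L)^d ψ(m/L)` for `m ∈ (qℤ)^d`, `0` otherwise. -/
def psiQL {d : ℕ} (ψ : (Fin d → ℝ) → ℝ) (q : ℕ) (L : ℝ) : (Fin d → ℤ) → ℝ :=
  Set.indicator {m : Fin d → ℤ | ∀ i, (q : ℤ) ∣ m i}
    (fun m => ((q : ℝ) / L) ^ d * ψ (fun i => (m i : ℝ) / L))

/-- `q_j = lcm{1,2,…,2^j}`. -/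
def qlcm (j : ℕ) : ℕ := (Finset.Icc 1 (2 ^ j)).lcm id

/-- `Ψ_{j,k} = ψ_{q_j, 2^{k-j}}`. -/
def PsiJK {d : ℕ} (ψ : (Fin d → ℝ) → ℝ) (j k : ℕ) : (Fin d → ℤ) → ℝ :=
  psiQL ψ (qlcm j) ((2 : ℝ) ^ ((k : ℤ) - (j : ℤ)))

/-- `ΔΨ_{j,k} = Ψ_{j+1,k} - Ψ_{j,k}`. -/
def DeltaPsiJK {d : ℕ} (ψ : (Fin d → ℝ) → ℝ) (j k : ℕ) : (Fin d → ℤ) → ℝ :=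
  fun m => PsiJK ψ (j + 1) k m - PsiJK ψ j k m

/-- The cube `Q = [-1/2,1/2]^d`. -/
def cubeQ (d : ℕ) : Set (Fin d → ℝ) := {ξ | ∀ i, |ξ i| ≤ 1 / 2}

/-- The cube `2Q = [-1,1]^d`. -/
def cube2Q (d : ℕ) : Set (Fin d → ℝ) := {ξ | ∀ i, |ξ i| ≤ 1}

/-!
Representing `A_λ` as an integral over `α ∈ [0, 1]` of convolutions with Gaussian kernels twisted by
`e(α |m|²)`, and applying Cauchy–Schwarz with a weight adapted to a Farey dissection, removes the
supremum over `λ`: only the normalisation `N_λ ≳ λ ^ (d - 2)` and an `L²` norm weighted in `α`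
remain. For `d ≥ 5` the lower bound for `N_λ` follows by slicing from `r₄(n) ≥ n` for odd `n`, which
holds because each of the `n` right ideals of the integral quaternions cut out by a row `(1, t)`
modulo `n` contains, by Minkowski's theorem, an element of norm `n` that determines the ideal.

By Parseval the weighted `L²` norm is an integral of `|f̂|²` against products of theta functions.
On the Farey arc at `a / q`, Poisson summation and the Gauss sum bound show that they are large only
when every coordinate of the frequency is close to a rational with denominator `q`. Where this
happens with `q` dividing `q_j`, the multiplier of `Ψ_{j,k}` equals `1`, so `f - f * Ψ_{j,k}` does
not see these frequencies; all others gain `k ^ (-3 / 2)`, which is summable over the scales `k`.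
-/

section QuaternionMatrix

open Quaternion Matrix

variable {R : Type*} [CommRing R] {a b : R}

/-- A solution of `a ^ 2 + b ^ 2 = -1` in a commutative ring represents the integral quaternions by
`2 × 2` matrices; over `ZMod n` with `n` odd it splits the quaternions modulo `n`. -/
def quatMatrix (hab : a ^ 2 + b ^ 2 = -1) : ℍ[ℤ] →ₐ[ℤ] Matrix (Fin 2) (Fin 2) R :=
  QuaternionAlgebra.lift
    { i := !![0, -1; 1, 0]
      j := !![a, b; b, -a]
      k := !![-b, a; a, b]
      i_mul_i := by simp [one_fin_two]
      j_mul_j := by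
        have hba : b * b + a * a = -1 := by linear_combination hab
        simp [one_fin_two, mul_comm b a, hba, add_comm (a * a)]
      i_mul_j := by simp
      j_mul_i := by simp }

lemma quatMatrix_apply (hab : a ^ 2 + b ^ 2 = -1) (v : ℍ[ℤ]) :
    quatMatrix hab v =
      !![v.re + a * v.imJ - b * v.imK, -v.imI + b * v.imJ + a * v.imK;
        v.imI + b * v.imJ + a * v.imK, v.re - a * v.imJ + b * v.imK] := by
  change QuaternionAlgebra.Basis.lift _ v = _
  ext i j
  fin_cases i <;> fin_cases j <;>
    simp [QuaternionAlgebra.Basis.lift, Matrix.intCast_apply] <;> ring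

lemma det_quatMatrix (hab : a ^ 2 + b ^ 2 = -1) (v : ℍ[ℤ]) :
    (quatMatrix hab v).det = (normSq v : ℤ) := by
  rw [quatMatrix_apply, det_fin_two_of, normSq_def']
  push_cast
  linear_combination (-(v.imJ : R) ^ 2 - (v.imK : R) ^ 2) * hab

lemma quatMatrix_star (hab : a ^ 2 + b ^ 2 = -1) (v : ℍ[ℤ]) :
    quatMatrix hab (star v) = (quatMatrix hab v).adjugate := by
  rw [quatMatrix_apply, quatMatrix_apply, adjugate_fin_two_of]
  ext i j
  fin_cases i <;> fin_cases j <;> simp <;> ring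

lemma intCast_eq_zero_of_quatMatrix_eq_zero (hab : a ^ 2 + b ^ 2 = -1) (h2 : IsUnit (2 : R))
    {v : ℍ[ℤ]} (h : quatMatrix hab v = 0) :
    (v.re : R) = 0 ∧ (v.imI : R) = 0 ∧ (v.imJ : R) = 0 ∧ (v.imK : R) = 0 := by
  rw [quatMatrix_apply] at h
  have h00 := congr_fun₂ h 0 0
  have h01 := congr_fun₂ h 0 1
  have h10 := congr_fun₂ h 1 0
  have h11 := congr_fun₂ h 1 1
  simp only [of_apply, cons_val', cons_val_zero, cons_val_one, cons_val_fin_one,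
    Matrix.zero_apply] at h00 h01 h10 h11
  refine ⟨h2.mul_left_cancel ?_, h2.mul_left_cancel ?_, h2.mul_left_cancel ?_,
    h2.mul_left_cancel ?_⟩
  · linear_combination h00 + h11
  · linear_combination h10 - h01
  · linear_combination -a * (h00 - h11) - b * (h10 + h01) + 2 * v.imJ * hab
  · linear_combination b * (h00 - h11) - a * (h10 + h01) + 2 * v.imK * hab

lemma vecMul_one_left_eq_zero_iff {t : R} {A : Matrix (Fin 2) (Fin 2) R} :
    ![1, t] ᵥ* A = 0 ↔ A 0 0 + t * A 1 0 = 0 ∧ A 0 1 + t * A 1 1 = 0 := by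
  simp [funext_iff, Fin.forall_fin_two, vecMul, dotProduct, Fin.sum_univ_two]

lemma det_eq_zero_of_vecMul_one_left {t : R} {A : Matrix (Fin 2) (Fin 2) R}
    (hA : ![1, t] ᵥ* A = 0) : A.det = 0 := by
  obtain ⟨h0, h1⟩ := vecMul_one_left_eq_zero_iff.1 hA
  rw [det_fin_two]
  linear_combination A 1 1 * h0 - A 1 0 * h1

lemma adjugate_mul_eq_zero_of_vecMul_one_left {t : R} {A B : Matrix (Fin 2) (Fin 2) R}
    (hA : ![1, t] ᵥ* A = 0) (hB : ![1, t] ᵥ* B = 0) : A.adjugate * B = 0 := by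
  obtain ⟨hA0, hA1⟩ := vecMul_one_left_eq_zero_iff.1 hA
  obtain ⟨hB0, hB1⟩ := vecMul_one_left_eq_zero_iff.1 hB
  rw [adjugate_fin_two]
  ext i j
  fin_cases i <;> fin_cases j <;> simp [mul_apply, Fin.sum_univ_two]
  · linear_combination A 1 1 * hB0 - B 1 0 * hA1
  · linear_combination A 1 1 * hB1 - B 1 1 * hA1
  · linear_combination -A 1 0 * hB0 + B 1 0 * hA0
  · linear_combination -A 1 0 * hB1 + B 1 1 * hA0

end QuaternionMatrix

lemma exists_sq_add_sq_eq_neg_one {n : ℕ} (hn : Odd n) :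
    ∃ a b : ZMod n, a ^ 2 + b ^ 2 = -1 := by
  have hcop : n.Coprime 4 := (Nat.coprime_two_right.2 hn).pow_right 2
  -- By Dirichlet there is a prime `p ≡ -1 [MOD n]` with `p ≡ 1 [MOD 4]`: a sum of two squares.
  obtain ⟨r, hrn, hr4⟩ := Nat.chineseRemainder hcop (n - 1) 1
  have hr : r.Coprime (n * 4) := by
    refine Nat.Coprime.mul_right ?_ ?_
    · rw [Nat.coprime_iff_gcd_eq_one, hrn.gcd_eq]
      exact (Nat.coprime_self_sub_left hn.pos).2 (Nat.coprime_one_left n)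
    · rw [Nat.coprime_iff_gcd_eq_one, hr4.gcd_eq]
      exact Nat.gcd_one_left 4
  obtain ⟨p, -, hp, hpr⟩ :=
    Nat.forall_exists_prime_gt_and_modEq 0 (mul_ne_zero hn.pos.ne' four_ne_zero) hr
  have hp4 : p % 4 = 1 := (hpr.of_mul_left n).trans hr4
  have hpn : (p : ZMod n) = -1 := by
    rw [(ZMod.natCast_eq_natCast_iff _ _ _).2 ((hpr.of_mul_right 4).trans hrn),
      Nat.cast_sub hn.pos]
    simp
  have := Fact.mk hp
  obtain ⟨x, y, hxy⟩ := Nat.Prime.sq_add_sq (p := p) (by omega)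
  exact ⟨x, y, by rw [← hpn, ← hxy]; push_cast; ring⟩

section Minkowski

open MeasureTheory Module

variable {ι : Type*}

lemma map_intCast_top_eq_span_basisFun [Finite ι] :
    (⊤ : AddSubgroup (ι → ℤ)).map ((Int.castAddHom ℝ).compLeft ι) =
      (Submodule.span ℤ (Set.range (Pi.basisFun ℝ ι))).toAddSubgroup := by
  ext x
  rw [Submodule.mem_toAddSubgroup, Basis.mem_span_iff_repr_mem]
  simp only [AddSubgroup.mem_map, AddSubgroup.mem_top, true_and, Pi.basisFun_repr, Set.mem_range,
    eq_intCast]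
  exact ⟨fun ⟨v, hv⟩ i ↦ ⟨v i, congrFun hv i⟩, fun h ↦ ⟨fun i ↦ (h i).choose,
    funext fun i ↦ (h i).choose_spec⟩⟩

lemma span_map_intCast_eq_top [Finite ι] (L : AddSubgroup (ι → ℤ)) [L.FiniteIndex] :
    Submodule.span ℝ (L.map ((Int.castAddHom ℝ).compLeft ι) : Set (ι → ℝ)) = ⊤ := by
  classical
  rw [eq_top_iff, ← (Pi.basisFun ℝ ι).span_eq, Submodule.span_le]
  rintro _ ⟨i, rfl⟩
  have hmem : (L.index • Pi.single i 1 : ι → ℤ) ∈ L := L.nsmul_index_mem _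
  have hL : (L.index : ℝ) ≠ 0 := Nat.cast_ne_zero.2 AddSubgroup.FiniteIndex.index_ne_zero
  have key : Pi.basisFun ℝ ι i =
      (L.index : ℝ)⁻¹ • (Int.castAddHom ℝ).compLeft ι (L.index • Pi.single i 1) := by
    ext j
    by_cases hj : j = i <;> simp [hj, hL]
  rw [key]
  exact Submodule.smul_mem _ _ (Submodule.subset_span (AddSubgroup.mem_map_of_mem _ hmem))

theorem exists_ne_zero_mem_of_index_mul_two_pow_lt_volume [Fintype ι]
    (L : AddSubgroup (ι → ℤ)) [L.FiniteIndex] {s : Set (ι → ℝ)} (hsymm : ∀ x ∈ s, -x ∈ s)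
    (hconv : Convex ℝ s)
    (hvol : L.index * 2 ^ Fintype.card ι < volume s) :
    ∃ v ∈ L, v ≠ 0 ∧ (fun i ↦ (v i : ℝ)) ∈ s := by
  set f : (ι → ℤ) →+ (ι → ℝ) := (Int.castAddHom ℝ).compLeft ι
  have hf : Function.Injective f :=
    fun v w h ↦ funext fun i ↦ Int.cast_injective (congrFun h i)
  set Z : Submodule ℤ (ι → ℝ) := Submodule.span ℤ (Set.range (Pi.basisFun ℝ ι))
  set M : Submodule ℤ (ι → ℝ) := AddSubgroup.toIntSubmodule (L.map f)
  have hMZ : M ≤ Z := by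
    rw [← Submodule.toAddSubgroup_le, ← map_intCast_top_eq_span_basisFun]
    exact AddSubgroup.map_mono le_top
  have : DiscreteTopology M := DiscreteTopology.of_subset
    (inferInstanceAs (DiscreteTopology Z)) hMZ
  have : IsZLattice ℝ M := ⟨span_map_intCast_eq_top L⟩
  have hcov : ZLattice.covolume M = L.index := by
    have hZ : ZLattice.covolume Z = 1 := by
      rw [ZLattice.covolume_eq_measure_fundamentalDomain Z volume
        (ZSpan.isAddFundamentalDomain' (Pi.basisFun ℝ ι) volume)]
      simp [Measure.real, ZSpan.fundamentalDomain_pi_basisFun, volume_pi_pi]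
    have hrel := ZLattice.covolume_div_covolume_eq_relIndex M Z hMZ
    rw [hZ, div_one, ← map_intCast_top_eq_span_basisFun] at hrel
    rw [hrel, ← AddSubgroup.relIndex_top_right L]
    exact congrArg _ (AddSubgroup.relIndex_map_map_of_injective _ _ hf)
  have hfund := ZLattice.isAddFundamentalDomain (IsZLattice.basis M) volume
  have hvolM : volume (ZSpan.fundamentalDomain ((IsZLattice.basis M).ofZLatticeBasis ℝ)) =
      L.index := by
    rw [ZLattice.covolume_eq_measure_fundamentalDomain M volume hfund] at hcov
    rw [← ENNReal.ofReal_toReal (ZSpan.fundamentalDomain_isBounded _).measure_lt_top.ne,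
      ← Measure.real, hcov, ENNReal.ofReal_natCast]
  have : Countable M.toAddSubgroup := inferInstanceAs (Countable M)
  obtain ⟨⟨x, v, hv, rfl⟩, hx0, hxs⟩ :=
    exists_ne_zero_mem_lattice_of_measure_mul_two_pow_lt_measure (L := M.toAddSubgroup) hfund
      hsymm hconv (by rwa [hvolM, finrank_fintype_fun_eq_card])
  refine ⟨v, hv, ?_, hxs⟩
  rintro rfl
  exact hx0 (Subtype.ext (map_zero f))

lemma setOf_sum_sq_lt_eq_preimage_ball [Fintype ι] (r : ℝ) :
    {x : ι → ℝ | ∑ i, x i ^ 2 < r} =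
      WithLp.toLp 2 ⁻¹' Metric.ball (0 : EuclideanSpace ℝ ι) (√r) := by
  ext x
  simp [EuclideanSpace.norm_eq,
    Real.sqrt_lt_sqrt_iff (Finset.sum_nonneg fun i _ ↦ sq_nonneg (x i))]

lemma convex_setOf_sum_sq_lt [Fintype ι] (r : ℝ) : Convex ℝ {x : ι → ℝ | ∑ i, x i ^ 2 < r} := by
  rw [setOf_sum_sq_lt_eq_preimage_ball]
  exact (convex_ball _ _).linear_preimage (WithLp.linearEquiv 2 ℝ (ι → ℝ)).symm.toLinearMap

lemma volume_setOf_sum_sq_lt_fin_four {r : ℝ} (hr : 0 ≤ r) :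
    volume {x : Fin 4 → ℝ | ∑ i, x i ^ 2 < r} = ENNReal.ofReal (π ^ 2 / 2 * r ^ 2) := by
  rw [setOf_sum_sq_lt_eq_preimage_ball, (PiLp.volume_preserving_toLp (Fin 4)).measure_preimage
    measurableSet_ball.nullMeasurableSet,
    InnerProductSpace.volume_ball_of_dim_even (k := 2) (by simp), finrank_euclideanSpace_fin,
    ← ENNReal.ofReal_pow (Real.sqrt_nonneg r), ← ENNReal.ofReal_mul (by positivity),
    show √r ^ 4 = (√r ^ 2) ^ 2 by ring, Real.sq_sqrt hr]
  congr 1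
  norm_num [Nat.factorial]
  ring

end Minkowski

section LatticeSphere

lemma finite_setOf_sum_sq_eq {ι : Type*} [Fintype ι] (N : ℕ) :
    {m : ι → ℤ | ∑ i, m i ^ 2 = N}.Finite := by
  refine (Set.Finite.pi fun _ ↦ Set.finite_Icc (-(N : ℤ)) N).subset fun m hm i _ ↦ ?_
  have hi : |m i| ^ 2 ≤ N := by
    rw [sq_abs, ← hm.out]
    exact Finset.single_le_sum (f := fun i ↦ m i ^ 2) (fun j _ ↦ sq_nonneg (m j))
      (Finset.mem_univ i)
  exact abs_le.1 ((Int.le_self_sq _).trans hi)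

/-- The lattice points of `ℤ ^ d` on the sphere of squared radius `N`, as a finite set. -/
def latticeSphere (d N : ℕ) : Finset (Fin d → ℤ) := (finite_setOf_sum_sq_eq N).toFinset

lemma mem_latticeSphere {d N : ℕ} {m : Fin d → ℤ} :
    m ∈ latticeSphere d N ↔ ∑ i, m i ^ 2 = (N : ℤ) := by
  simp [latticeSphere]

end LatticeSphere

section FourSquares

open Quaternion Matrix

variable {n : ℕ} {a b : ZMod n} (hab : a ^ 2 + b ^ 2 = -1) {t : ZMod n} {v w : ℍ[ℤ]}

/-- The right ideal of the integral quaternions `v` whose matrix `φ(v)` modulo `n` is annihilated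
from the left by the row `(1, t)`. -/
def quatIdeal (t : ZMod n) : AddSubgroup ℍ[ℤ] :=
  (AddMonoidHom.mk' (fun v ↦ ![1, t] ᵥ* quatMatrix hab v) fun v w ↦ by
    rw [map_add, vecMul_add]).ker

lemma mem_quatIdeal : v ∈ quatIdeal hab t ↔ ![1, t] ᵥ* quatMatrix hab v = 0 := Iff.rfl

lemma mul_mem_quatIdeal (hv : v ∈ quatIdeal hab t) (x : ℍ[ℤ]) : v * x ∈ quatIdeal hab t := by
  rw [mem_quatIdeal] at hv ⊢
  rw [map_mul, ← vecMul_vecMul, hv, zero_vecMul]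

lemma index_quatIdeal_le [NeZero n] (t : ZMod n) : (quatIdeal hab t).index ≤ n ^ 2 := by
  rw [quatIdeal, AddSubgroup.index_ker]
  calc
    Nat.card _ ≤ Nat.card (Fin 2 → ZMod n) :=
      Nat.card_le_card_of_injective _ Subtype.val_injective
    _ = n ^ 2 := by simp

instance [NeZero n] : (quatIdeal hab t).FiniteIndex := AddSubgroup.finiteIndex_ker _

lemma natCast_dvd_normSq_of_mem_quatIdeal (hv : v ∈ quatIdeal hab t) : (n : ℤ) ∣ normSq v := by
  rw [← ZMod.intCast_zmod_eq_zero_iff_dvd, ← det_quatMatrix hab v]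
  exact det_eq_zero_of_vecMul_one_left hv

lemma exists_mem_quatIdeal_normSq_eq [NeZero n] (t : ZMod n) :
    ∃ w ∈ quatIdeal hab t, normSq w = n := by
  set e : (Fin 4 → ℤ) ≃+ ℍ[ℤ] := (QuaternionAlgebra.addEquivTuple _ _ _).symm
  set L : AddSubgroup (Fin 4 → ℤ) := (quatIdeal hab t).comap e.toAddMonoidHom
  have hnormSq (v : Fin 4 → ℤ) : normSq (e v) = ∑ i, v i ^ 2 := by
    rw [normSq_def', Fin.sum_univ_four]
    rfl
  have hindex : L.index = (quatIdeal hab t).index :=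
    AddSubgroup.index_comap_of_surjective _ e.surjective
  have : L.FiniteIndex := ⟨hindex.trans_ne AddSubgroup.FiniteIndex.index_ne_zero⟩
  have hn : (0 : ℝ) < n := Nat.cast_pos.2 (NeZero.pos n)
  have hvol : (L.index : ℝ≥0∞) * 2 ^ Fintype.card (Fin 4) <
      MeasureTheory.volume {x : Fin 4 → ℝ | ∑ i, x i ^ 2 < 2 * n} := by
    rw [hindex, volume_setOf_sum_sq_lt_fin_four (by positivity), Fintype.card_fin]
    calc
      _ ≤ ((n ^ 2 : ℕ) : ℝ≥0∞) * 2 ^ 4 := by gcongr; exact index_quatIdeal_le hab t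
      _ = ENNReal.ofReal (n ^ 2 * 2 ^ 4) := by
        rw [ENNReal.ofReal_mul (by positivity)]
        norm_cast
      _ < _ := (ENNReal.ofReal_lt_ofReal_iff (by positivity)).2 (by
        have : (8 : ℝ) < π ^ 2 := by nlinarith [Real.pi_gt_three]
        nlinarith [pow_pos hn 2])
  obtain ⟨v, hv, hv0, hvn⟩ := exists_ne_zero_mem_of_index_mul_two_pow_lt_volume _
    (by simp) (convex_setOf_sum_sq_lt _) hvol
  refine ⟨e v, hv, ?_⟩
  have hpos : 0 < normSq (e v) := normSq_nonneg.lt_of_ne' (by simpa using hv0)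
  have hlt : normSq (e v) < 2 * n := by
    rw [hnormSq]
    have hvn : ∑ i, (v i : ℝ) ^ 2 < 2 * n := hvn
    exact_mod_cast hvn
  obtain ⟨m, hm⟩ := natCast_dvd_normSq_of_mem_quatIdeal hab (v := e v) hv
  rw [hm] at hpos hlt ⊢
  have hm1 : m = 1 := by
    have := pos_of_mul_pos_right hpos (Nat.cast_nonneg n)
    have := lt_of_mul_lt_mul_left (hlt.trans_eq (mul_comm _ _)) (Nat.cast_nonneg n)
    omega
  rw [hm1, mul_one]

lemma exists_eq_mul_of_mem_quatIdeal (hn : Odd n) (hw : w ∈ quatIdeal hab t) (hwn : normSq w = n)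
    (hv : v ∈ quatIdeal hab t) : ∃ x, v = w * x := by
  have hφ : quatMatrix hab (star w * v) = 0 := by
    rw [map_mul, quatMatrix_star]
    exact adjugate_mul_eq_zero_of_vecMul_one_left hw hv
  have h2 : IsUnit (2 : ZMod n) := by
    simpa using (ZMod.unitOfCoprime 2 (Nat.coprime_two_left.2 hn)).isUnit
  obtain ⟨hre, hi, hj, hk⟩ := intCast_eq_zero_of_quatMatrix_eq_zero hab h2 hφ
  rw [ZMod.intCast_zmod_eq_zero_iff_dvd] at hre hi hj hk
  obtain ⟨x₀, hre⟩ := hre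
  obtain ⟨x₁, hi⟩ := hi
  obtain ⟨x₂, hj⟩ := hj
  obtain ⟨x₃, hk⟩ := hk
  set x : ℍ[ℤ] := ⟨x₀, x₁, x₂, x₃⟩
  have hx : star w * v = n * x := by
    rw [← coe_natCast, coe_mul_eq_smul]
    ext <;> simp only [hre, hi, hj, hk] <;> rfl
  have hn0 : (n : ℍ[ℤ]) ≠ 0 := by
    rw [← normSq_ne_zero, normSq_natCast]
    exact pow_ne_zero 2 (Nat.cast_ne_zero.2 hn.pos.ne')
  refine ⟨x, mul_left_cancel₀ hn0 ?_⟩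
  calc n * v = w * star w * v := by rw [self_mul_star, hwn, coe_natCast]
    _ = n * (w * x) := by rw [mul_assoc, hx, ← mul_assoc, ← Nat.cast_comm, mul_assoc]

lemma quatIdeal_injective (hn : Odd n) {t t' : ZMod n}
    (h : quatIdeal hab t ≤ quatIdeal hab t') : t = t' := by
  obtain ⟨A, rfl⟩ := ZMod.intCast_surjective a
  obtain ⟨B, rfl⟩ := ZMod.intCast_surjective b
  obtain ⟨T, rfl⟩ := ZMod.intCast_surjective t
  -- The matrix of this quaternion is `!![-2 * T, 0; 2, 0]`.
  set u : ℍ[ℤ] := ⟨-T, 1, A * T - B, -B * T - A⟩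
  have hu (s : ZMod n) : u ∈ quatIdeal hab s ↔ 2 * s = 2 * T := by
    rw [mem_quatIdeal, quatMatrix_apply, vecMul_one_left_eq_zero_iff]
    simp only [u, of_apply, cons_val', cons_val_zero, cons_val_one, cons_val_fin_one]
    push_cast
    constructor
    · rintro ⟨h, -⟩
      linear_combination h - (T - s) * hab
    · intro h
      constructor
      · linear_combination h + (T - s) * hab
      · linear_combination (-1 - s * T) * hab
  have h2 : IsUnit (2 : ZMod n) := by
    simpa using (ZMod.unitOfCoprime 2 (Nat.coprime_two_left.2 hn)).isUnit
  exact (h2.mul_left_cancel ((hu t').1 (h ((hu T).2 rfl)))).symm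

lemma natCast_le_card_latticeSphere_four (hn : Odd n) : n ≤ (latticeSphere 4 n).card := by
  obtain ⟨a, b, hab⟩ := exists_sq_add_sq_eq_neg_one hn
  have : NeZero n := ⟨hn.pos.ne'⟩
  choose w hw hwn using exists_mem_quatIdeal_normSq_eq hab
  have hinj : Function.Injective w := by
    refine fun t t' h ↦ quatIdeal_injective hab hn fun v hv ↦ ?_
    obtain ⟨x, rfl⟩ := exists_eq_mul_of_mem_quatIdeal hab hn (hw t) (hwn t) hv
    exact mul_mem_quatIdeal hab (h ▸ hw t') x
  calc n = (Finset.univ : Finset (ZMod n)).card := by rw [Finset.card_univ, ZMod.card]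
    _ ≤ (latticeSphere 4 n).card := by
      refine Finset.card_le_card_of_injOn (fun t ↦ QuaternionAlgebra.equivTuple _ _ _ (w t))
        (fun t _ ↦ ?_) ((QuaternionAlgebra.equivTuple _ _ _).injective.comp hinj).injOn
      rw [Finset.mem_coe, mem_latticeSphere, ← hwn t, normSq_def', Fin.sum_univ_four]
      rfl

end FourSquares

section LatticePointCount

lemma sum_card_latticeSphere_le (d N : ℕ) {X : Finset ℕ} (hX : ∀ x ∈ X, x ^ 2 ≤ N) :
    ∑ x ∈ X, (latticeSphere d (N - x ^ 2)).card ≤ (latticeSphere (d + 1) N).card := by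
  rw [← Finset.card_sigma X fun x ↦ latticeSphere d (N - x ^ 2)]
  refine Finset.card_le_card_of_injOn (fun y ↦ Fin.cons (y.1 : ℤ) y.2) ?_ ?_
  · rintro ⟨x, m⟩ hy
    obtain ⟨hx, hm⟩ := Finset.mem_sigma.1 hy
    rw [mem_latticeSphere] at hm
    rw [Finset.mem_coe, mem_latticeSphere, Fin.sum_univ_succ]
    simp only [Fin.cons_zero, Fin.cons_succ, hm]
    rw [Nat.cast_sub (hX x hx), Nat.cast_pow, add_sub_cancel]
  · rintro ⟨x, m⟩ - ⟨y, n⟩ - h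
    obtain ⟨hxy, rfl⟩ := Fin.cons_inj.1 h
    obtain rfl : x = y := Nat.cast_injective hxy
    rfl

lemma exists_finset_odd_sub_sq {N : ℕ} (hN : 1 ≤ N) :
    ∃ X : Finset ℕ, √N ≤ 6 * X.card ∧ ∀ x ∈ X, x ^ 2 ≤ N / 2 ∧ Odd (N - x ^ 2) := by
  set s := Nat.sqrt (N / 2)
  have hs : s * s ≤ N / 2 := Nat.sqrt_le _
  have hs' : N / 2 < (s + 1) * (s + 1) := Nat.lt_succ_sqrt _
  set e := (N + 1) % 2 with he
  have hes : e ≤ s := by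
    by_contra! h
    obtain ⟨h1, h0⟩ : e = 1 ∧ s = 0 := by omega
    rw [h0] at hs'
    omega
  refine ⟨(Finset.range ((s - e) / 2 + 1)).image fun y ↦ 2 * y + e, ?_, fun x hx ↦ ?_⟩
  · rw [Finset.card_image_of_injective _ fun y z h ↦ by simpa using h, Finset.card_range,
      Real.sqrt_le_left (by positivity)]
    have hsh : s + 1 ≤ 4 * ((s - e) / 2 + 1) := by omega
    have : N ≤ (6 * ((s - e) / 2 + 1)) ^ 2 := by
      nlinarith [show N < 2 * ((s + 1) * (s + 1)) by omega]
    exact_mod_cast this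
  · obtain ⟨y, hy, rfl⟩ := Finset.mem_image.1 hx
    have hys : 2 * y + e ≤ s := by
      have := Finset.mem_range.1 hy
      omega
    have hsq : (2 * y + e) ^ 2 ≤ N / 2 := by nlinarith
    refine ⟨hsq, (Nat.odd_sub (hsq.trans (Nat.div_le_self _ _))).2 ?_⟩
    rw [Nat.odd_iff, Nat.even_pow' two_ne_zero, Nat.even_iff]
    omega

lemma le_card_latticeSphere_succ {d k : ℕ} {c : ℝ} (hc : 0 ≤ c)
    (h : ∀ N : ℕ, Odd N → c * √N ^ k ≤ (latticeSphere d N).card) {N : ℕ} (hN : 1 ≤ N) :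
    c / (6 * 2 ^ k) * √N ^ (k + 1) ≤ (latticeSphere (d + 1) N).card := by
  obtain ⟨X, hXcard, hX⟩ := exists_finset_odd_sub_sq hN
  have hslice : ∀ x ∈ X, c * (√N / 2) ^ k ≤ (latticeSphere d (N - x ^ 2)).card := fun x hx ↦ by
    obtain ⟨hxN, hodd⟩ := hX x hx
    refine le_trans ?_ (h _ hodd)
    gcongr
    refine Real.le_sqrt_of_sq_le ?_
    rw [div_pow, Real.sq_sqrt (Nat.cast_nonneg _), div_le_iff₀ (by positivity)]
    exact_mod_cast (show N ≤ (N - x ^ 2) * 2 ^ 2 by omega)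
  calc c / (6 * 2 ^ k) * √N ^ (k + 1) = √N / 6 * (c * (√N / 2) ^ k) := by
        rw [div_pow]
        field_simp
        ring
    _ ≤ X.card * (c * (√N / 2) ^ k) := by gcongr; linarith
    _ = ∑ x ∈ X, c * (√N / 2) ^ k := by rw [Finset.sum_const, nsmul_eq_mul]
    _ ≤ ∑ x ∈ X, ((latticeSphere d (N - x ^ 2)).card : ℝ) := Finset.sum_le_sum hslice
    _ ≤ (latticeSphere (d + 1) N).card := mod_cast
      sum_card_latticeSphere_le d N fun x hx ↦ (hX x hx).1.trans (Nat.div_le_self _ _)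

lemma exists_le_card_latticeSphere {d : ℕ} (hd : 5 ≤ d) :
    ∃ c : ℝ, 0 < c ∧ ∀ N : ℕ, 1 ≤ N → c * √N ^ (d - 2) ≤ (latticeSphere d N).card := by
  induction d, hd using Nat.le_induction with
  | base =>
    refine ⟨1 / (6 * 2 ^ 2), by positivity, fun N ↦
      le_card_latticeSphere_succ zero_le_one fun N hN ↦ ?_⟩
    rw [one_mul, Real.sq_sqrt (Nat.cast_nonneg N)]
    exact_mod_cast natCast_le_card_latticeSphere_four hN
  | succ d hd ih =>
    obtain ⟨c, hc, h⟩ := ih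
    refine ⟨c / (6 * 2 ^ (d - 2)), by positivity, fun N hN ↦ ?_⟩
    rw [Nat.sub_add_comm (by omega)]
    exact le_card_latticeSphere_succ hc.le (fun N hN ↦ h N hN.pos) hN

variable {d N : ℕ} {lam : ℝ}

lemma sph_eq_latticeSphere (hN : (N : ℝ) = lam ^ 2) : sph d lam = latticeSphere d N := by
  ext m
  rw [Finset.mem_coe, mem_latticeSphere, sph, Set.mem_ofPred_eq, nsq, ← hN]
  norm_cast

lemma exists_le_Nlam (hd : 5 ≤ d) :
    ∃ c : ℝ, 0 < c ∧ ∀ (lam : ℝ) (N : ℕ), 1 ≤ lam → (N : ℝ) = lam ^ 2 →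
      c * lam ^ (d - 2) ≤ Nlam d lam := by
  obtain ⟨c, hc, h⟩ := exists_le_card_latticeSphere hd
  refine ⟨c, hc, fun lam N hlam hN ↦ ?_⟩
  have hN1 : 1 ≤ N := by
    have : (1 : ℝ) ≤ N := hN ▸ one_le_pow₀ hlam
    exact_mod_cast this
  calc c * lam ^ (d - 2) = c * √N ^ (d - 2) := by rw [hN, Real.sqrt_sq (by linarith)]
    _ ≤ (latticeSphere d N).card := h N hN1
    _ = Nlam d lam := by
      rw [Nlam, sph_eq_latticeSphere hN, Nat.card_coe_set_eq, Set.ncard_coe_finset]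

end LatticePointCount

section GaussSum

variable {q : ℕ} [NeZero q]

lemma card_filter_two_mul_eq_zero_le : ({h | 2 * h = 0} : Finset (ZMod q)).card ≤ 2 := by
  refine le_trans (Finset.card_le_card (t := {0, ((q / 2 : ℕ) : ZMod q)}) fun h hh ↦ ?_)
    Finset.card_le_two
  obtain ⟨c, hc⟩ : q ∣ 2 * h.val := by
    rw [← ZMod.natCast_eq_zero_iff]
    simpa using hh
  have hlt := ZMod.val_lt h
  have hc2 : c < 2 := by nlinarith
  rw [Finset.mem_insert, Finset.mem_singleton]
  interval_cases c
  · exact .inl ((ZMod.val_eq_zero h).mp (by omega))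
  · exact .inr (by rw [show q / 2 = h.val by omega, ZMod.natCast_zmod_val])

/-- The quadratic Gauss sum `∑ r mod q, e((a r² + l r) / q)`. -/
def quadGaussSum (a l : ZMod q) : ℂ := ∑ r : ZMod q, ZMod.stdAddChar (a * r ^ 2 + l * r)

lemma quadGaussSum_mul_conj {a : ZMod q} (ha : IsUnit a) (l : ZMod q) :
    quadGaussSum a l * (starRingEnd ℂ) (quadGaussSum a l) =
      ∑ h : ZMod q, ZMod.stdAddChar (a * h ^ 2 + l * h) * if 2 * h = 0 then (q : ℂ) else 0 := by
  have shift (s : ZMod q) :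
      ∑ r : ZMod q, ZMod.stdAddChar (a * r ^ 2 + l * r) *
          ZMod.stdAddChar (-(a * s ^ 2 + l * s)) =
        ∑ h : ZMod q, (ZMod.stdAddChar (a * h ^ 2 + l * h) * ZMod.stdAddChar (s * (2 * h * a)) :
          ℂ) := by
    rw [← Equiv.sum_comp (Equiv.addRight s)]
    refine Finset.sum_congr rfl fun h _ ↦ ?_
    rw [← AddChar.map_add_eq_mul, ← AddChar.map_add_eq_mul, Equiv.coe_addRight]
    congr 1
    ring
  simp only [quadGaussSum, map_sum, ← AddChar.map_neg_eq_conj]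
  rw [Finset.sum_mul_sum, Finset.sum_comm, Finset.sum_congr rfl fun s _ ↦ shift s,
    Finset.sum_comm]
  refine Finset.sum_congr rfl fun h _ ↦ ?_
  rw [← Finset.mul_sum, AddChar.sum_mulShift _ (ZMod.isPrimitive_stdAddChar q), ZMod.card]
  simp only [ha.mul_left_eq_zero, Nat.cast_ite, Nat.cast_zero]

lemma norm_sq_quadGaussSum_le {a : ZMod q} (ha : IsUnit a) (l : ZMod q) :
    ‖quadGaussSum a l‖ ^ 2 ≤ 2 * q :=
  calc ‖quadGaussSum a l‖ ^ 2
      = ‖quadGaussSum a l * (starRingEnd ℂ) (quadGaussSum a l)‖ := by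
        rw [norm_mul, RCLike.norm_conj, sq]
    _ ≤ ∑ h : ZMod q, if 2 * h = 0 then (q : ℝ) else 0 := by
        rw [quadGaussSum_mul_conj ha]
        refine norm_sum_le_of_le _ fun h _ ↦ ?_
        rw [norm_mul, AddChar.norm_apply, one_mul]
        split_ifs <;> simp
    _ ≤ 2 * q := by
        rw [← Finset.sum_filter, Finset.sum_const, nsmul_eq_mul]
        have := card_filter_two_mul_eq_zero_le (q := q)
        gcongr
        exact_mod_cast this

lemma tsum_int_eq_sum_zmod {f : ℤ → ℂ} (hf : Summable f) :
    ∑' n, f n = ∑ r : ZMod q, ∑' m : ℤ, f (m * q + r.val) := by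
  have hval : Function.Bijective fun r : ZMod q ↦ (⟨r.val, r.val_lt⟩ : Fin q) :=
    (Fintype.bijective_iff_injective_and_card _).mpr
      ⟨fun r s h ↦ ZMod.val_injective q (congrArg Fin.val h), by simp [ZMod.card]⟩
  let e : Fin q × ℤ ≃ ℤ := (Equiv.prodComm _ _).trans (Int.divModEquiv q).symm
  calc ∑' n, f n = ∑' p, (f ∘ e) p := (e.tsum_eq f).symm
    _ = ∑ r : Fin q, ∑' m : ℤ, f (m * q + (r : ℕ)) := by
      rw [(e.summable_iff.mpr hf).tsum_prod, tsum_fintype]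
      rfl
    _ = ∑ r : ZMod q, ∑' m : ℤ, f (m * q + r.val) :=
      (Fintype.sum_bijective _ hval _ _ fun _ ↦ rfl).symm

end GaussSum

section Theta

open Complex

lemma norm_jacobiTheta₂_term_ofReal (n : ℤ) (x : ℝ) (τ : ℂ) :
    ‖jacobiTheta₂_term n x τ‖ = rexp (-π * τ.im * n ^ 2) := by
  rw [norm_jacobiTheta₂_term, ofReal_im]
  ring_nf

lemma summable_exp_neg_mul_int_sq {c : ℝ} (hc : 0 < c) :
    Summable fun n : ℤ ↦ rexp (-c * n ^ 2) := by
  have him : ((c / π : ℝ) * I : ℂ).im = c / π := by simp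
  refine ((summable_jacobiTheta₂_term_iff (0 : ℝ) ((c / π : ℝ) * I)).mpr
    (by rw [him]; positivity)).norm.congr fun n ↦ ?_
  rw [norm_jacobiTheta₂_term_ofReal, him]
  field_simp

lemma exists_tsum_exp_neg_mul_sub_sq_le {c : ℝ} (hc : 0 < c) :
    ∃ C, 0 < C ∧ ∀ y : ℝ, (Summable fun n : ℤ ↦ rexp (-c * (y - n) ^ 2)) ∧
      ∑' n : ℤ, rexp (-c * (y - n) ^ 2) ≤ C := by
  have hs := summable_exp_neg_mul_int_sq (show 0 < c / 4 by positivity)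
  refine ⟨_, hs.tsum_pos (fun _ ↦ (Real.exp_pos _).le) 0 (Real.exp_pos _), fun y ↦ ?_⟩
  have hle (m : ℤ) :
      rexp (-c * (y - (m + round y : ℤ)) ^ 2) ≤ rexp (-(c / 4) * m ^ 2) := by
    have half_le : |(m : ℝ)| / 2 ≤ |y - (m + round y : ℤ)| := by
      rcases eq_or_ne m 0 with rfl | hm
      · simp
      · have one_le : (1 : ℝ) ≤ |(m : ℝ)| := by exact_mod_cast Int.one_le_abs hm
        have := abs_sub_abs_le_abs_sub (m : ℝ) (y - round y)
        rw [abs_sub_comm (m : ℝ), sub_sub, add_comm (round y : ℝ), ← Int.cast_add] at this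
        linarith [abs_sub_round y]
    have hsq := pow_le_pow_left₀ (by positivity) half_le 2
    rw [div_pow, sq_abs, sq_abs] at hsq
    exact Real.exp_le_exp.mpr (by nlinarith)
  have hs' := Summable.of_nonneg_of_le (fun _ ↦ (Real.exp_pos _).le) hle hs
  refine ⟨(Equiv.addRight (round y)).summable_iff.mp hs', ?_⟩
  rw [← (Equiv.addRight (round y)).tsum_eq]
  exact hs'.tsum_le_tsum hle hs

/-- The `r`-th residue class contributes a theta series of modulus `q² τ`, to which the functional
equation applies. -/
lemma jacobiTheta₂_term_mul_jacobiTheta₂ {q : ℕ} [NeZero q] (r : ℤ) (x : ℂ) {τ : ℂ} (hτ : τ ≠ 0) :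
    jacobiTheta₂_term r x τ * jacobiTheta₂ (q * (x + r * τ)) (q ^ 2 * τ) =
      1 / (-I * (q ^ 2 * τ)) ^ (1 / 2 : ℂ) *
        ∑' n : ℤ, cexp (-π * I * (x - n / q) ^ 2 / τ) * cexp (2 * π * I * (n * r / q)) := by
  have hq : (q : ℂ) ≠ 0 := NeZero.ne _
  rw [jacobiTheta₂_functional_equation, jacobiTheta₂, mul_assoc, mul_left_comm, ← tsum_mul_left,
    ← tsum_mul_left]
  congr 1
  refine tsum_congr fun n ↦ ?_
  rw [jacobiTheta₂_term, jacobiTheta₂_term, ← Complex.exp_add, ← Complex.exp_add,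
    ← Complex.exp_add]
  congr 1
  field_simp
  ring

lemma jacobiTheta₂_term_rat_add {q : ℕ} [NeZero q] (a m : ℤ) (r : ZMod q) (x τ : ℂ) :
    jacobiTheta₂_term (m * q + r.val) x (2 * (a / q) + τ) =
      ZMod.stdAddChar ((a : ZMod q) * r ^ 2) *
        (jacobiTheta₂_term (r.val : ℤ) x τ *
          jacobiTheta₂_term m (q * (x + (r.val : ℤ) * τ)) (q ^ 2 * τ)) := by
  have hq : (q : ℂ) ≠ 0 := NeZero.ne _
  have hr : (a : ZMod q) * r ^ 2 = ((a * (m * q + r.val) ^ 2 : ℤ) : ZMod q) := by simp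
  rw [hr, ZMod.stdAddChar_coe]
  simp only [jacobiTheta₂_term, ← Complex.exp_add]
  congr 1
  push_cast
  field_simp
  ring

lemma norm_cexp_neg_pi_mul_sq_div (y : ℝ) (τ : ℂ) :
    ‖cexp (-π * I * (y : ℂ) ^ 2 / τ)‖ = rexp (-(π * (τ.im / normSq τ) * y ^ 2)) := by
  have : (-π * I * (y : ℂ) ^ 2 / τ) = ((-π * y ^ 2 : ℝ) : ℂ) * (I * τ⁻¹) := by
    push_cast
    ring
  rw [norm_exp, this, re_ofReal_mul, I_mul_re, inv_im]
  ring_nf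

lemma summable_cexp_neg_pi_mul_sq_div {q : ℕ} [NeZero q] (x : ℝ) {τ : ℂ} (hτ : 0 < τ.im) :
    Summable fun n : ℤ ↦ cexp (-π * I * ((x - n / q : ℝ) : ℂ) ^ 2 / τ) := by
  have hq : (q : ℝ) ≠ 0 := NeZero.ne _
  have hτ0 : 0 < normSq τ := normSq_pos.mpr fun h ↦ by simp [h] at hτ
  obtain ⟨_, -, hsum⟩ := exists_tsum_exp_neg_mul_sub_sq_le
    (show 0 < π * (τ.im / normSq τ) / q ^ 2 by positivity)
  refine .of_norm <| (hsum (q * x)).1.congr fun n ↦ ?_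
  have : q * x - n = q * (x - n / q) := by field_simp
  rw [norm_cexp_neg_pi_mul_sq_div, this]
  field_simp

theorem jacobiTheta₂_rat_add {q : ℕ} [NeZero q] (a : ℤ) (x : ℝ) {τ : ℂ} (hτ : 0 < τ.im) :
    jacobiTheta₂ x (2 * (a / q) + τ) = 1 / (-I * (q ^ 2 * τ)) ^ (1 / 2 : ℂ) *
      ∑' n : ℤ, cexp (-π * I * ((x - n / q : ℝ) : ℂ) ^ 2 / τ) * quadGaussSum (a : ZMod q) n := by
  have hτ0 : τ ≠ 0 := by
    rintro rfl
    exact hτ.ne rfl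
  have summable_left : Summable fun n ↦ jacobiTheta₂_term n x (2 * (a / q) + τ) := by
    rw [summable_jacobiTheta₂_term_iff]
    have : (2 * (a / q) : ℂ).im = 0 := by exact_mod_cast ofReal_im (2 * (a / q))
    rwa [add_im, this, zero_add]
  have summable_right := summable_cexp_neg_pi_mul_sq_div (q := q) x hτ
  have residue (r : ZMod q) : ∑' m : ℤ, jacobiTheta₂_term (m * q + r.val) x (2 * (a / q) + τ) =
      1 / (-I * (q ^ 2 * τ)) ^ (1 / 2 : ℂ) *
        ∑' n : ℤ, cexp (-π * I * ((x - n / q : ℝ) : ℂ) ^ 2 / τ) *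
          ZMod.stdAddChar ((a : ZMod q) * r ^ 2 + (n : ZMod q) * r) := by
    simp_rw [jacobiTheta₂_term_rat_add, tsum_mul_left]
    rw [← jacobiTheta₂, jacobiTheta₂_term_mul_jacobiTheta₂ _ _ hτ0, mul_left_comm,
      ← tsum_mul_left]
    congr 1
    refine tsum_congr fun n ↦ ?_
    have : (n : ZMod q) * r = ((n * r.val : ℤ) : ZMod q) := by simp
    rw [AddChar.map_add_eq_mul, this, ZMod.stdAddChar_coe]
    push_cast
    ring_nf
  rw [jacobiTheta₂, tsum_int_eq_sum_zmod (q := q) summable_left,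
    Finset.sum_congr rfl fun r _ ↦ residue r,
    ← Finset.mul_sum, ← Summable.tsum_finsetSum]
  · simp_rw [quadGaussSum, Finset.mul_sum]
  · exact fun r _ ↦ .of_norm <| summable_right.norm.congr fun n ↦ by
      rw [norm_mul, AddChar.norm_apply, mul_one]

lemma norm_cexp_mul_quadGaussSum_le {q : ℕ} [NeZero q] {a : ℤ} (ha : IsCoprime a (q : ℤ))
    {x ρ : ℝ} {τ : ℂ} (hτ : q ^ 2 * normSq τ ≤ 5 * τ.im) (hτ0 : τ ≠ 0) (hρ : 0 ≤ ρ) {n : ℤ}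
    (hx : ρ ≤ |x - n / q|) :
    ‖cexp (-π * I * ((x - n / q : ℝ) : ℂ) ^ 2 / τ) * quadGaussSum (a : ZMod q) n‖ ≤
      rexp (-(τ.im / normSq τ * ρ ^ 2)) * √(2 * q) * rexp (-(1 / 5) * (q * x - n) ^ 2) := by
  have hq : (q : ℝ) ≠ 0 := NeZero.ne _
  have hns : 0 < normSq τ := normSq_pos.mpr hτ0
  set δ := τ.im / normSq τ
  have hδ : 1 / 5 * (q : ℝ) ^ 2 ≤ δ := by
    rw [le_div_iff₀ hns]
    linarith
  have gauss_le : ‖quadGaussSum (a : ZMod q) n‖ ≤ √(2 * q) :=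
    Real.le_sqrt_of_sq_le (norm_sq_quadGaussSum_le
      ((ZMod.coe_int_isUnit_iff_isCoprime a q).mpr ha.symm) _)
  have exp_le : rexp (-(π * δ * (x - n / q) ^ 2)) ≤
      rexp (-(δ * ρ ^ 2)) * rexp (-(1 / 5) * (q * x - n) ^ 2) := by
    have hqx : q * x - n = q * (x - n / q) := by field_simp
    have hρx : ρ ^ 2 ≤ (x - n / q) ^ 2 := by
      rw [← sq_abs (x - n / q)]
      gcongr
    have hδ0 : 0 ≤ δ := le_trans (by positivity) hδ
    have h₁ := mul_le_mul_of_nonneg_right hδ (sq_nonneg (x - n / q))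
    have h₂ := mul_le_mul_of_nonneg_left hρx hδ0
    have h₃ := mul_le_mul_of_nonneg_right Real.two_le_pi
      (mul_nonneg hδ0 (sq_nonneg (x - n / q)))
    rw [← Real.exp_add, Real.exp_le_exp, hqx, mul_pow]
    generalize (x - n / q) ^ 2 = D at h₁ h₂ h₃ ⊢
    linarith
  rw [norm_mul, norm_cexp_neg_pi_mul_sq_div, mul_right_comm (rexp _)]
  gcongr

theorem exists_norm_sq_jacobiTheta₂_rat_add_le :
    ∃ C, 1 ≤ C ∧ ∀ (q : ℕ) (a : ℤ) (x ρ : ℝ) (τ : ℂ), 0 < q → IsCoprime a (q : ℤ) →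
      0 < τ.im → q ^ 2 * normSq τ ≤ 5 * τ.im → 0 ≤ ρ → (∀ l : ℤ, ρ ≤ |x - l / q|) →
      ‖jacobiTheta₂ x (2 * (a / q) + τ)‖ ^ 2 ≤
        C / (q * ‖τ‖) * rexp (-(2 * (τ.im / normSq τ) * ρ ^ 2)) := by
  obtain ⟨C, -, hC⟩ := exists_tsum_exp_neg_mul_sub_sq_le (show (0 : ℝ) < 1 / 5 by norm_num)
  refine ⟨max 1 (2 * C ^ 2), le_max_left _ _, fun q a x ρ τ hq ha him hτ hρ hx ↦ ?_⟩
  have : NeZero q := ⟨hq.ne'⟩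
  have : (0 : ℝ) < q := by exact_mod_cast hq
  have hτ0 : τ ≠ 0 := by
    rintro rfl
    exact him.ne rfl
  have : 0 < ‖τ‖ := norm_pos_iff.mpr hτ0
  set E := rexp (-(τ.im / normSq τ * ρ ^ 2)) with hE
  have norm_tsum_le : ‖∑' n : ℤ, cexp (-π * I * ((x - n / q : ℝ) : ℂ) ^ 2 / τ) *
      quadGaussSum (a : ZMod q) n‖ ≤ E * √(2 * q) * C := by
    obtain ⟨hsum, hle⟩ := hC (q * x)
    refine (tsum_of_norm_bounded (hsum.mul_left _).hasSum fun n ↦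
      norm_cexp_mul_quadGaussSum_le ha hτ hτ0 hρ (hx n)).trans ?_
    rw [tsum_mul_left]
    gcongr
  have norm_sqrt_sq : ‖(-I * (q ^ 2 * τ)) ^ (1 / 2 : ℂ)‖ ^ 2 = q ^ 2 * ‖τ‖ := by
    rw [← norm_pow, one_div, Complex.cpow_ofNat_inv_pow]
    simp
  rw [jacobiTheta₂_rat_add a x him, norm_mul, mul_pow, norm_div, div_pow, norm_sqrt_sq, norm_one,
    one_pow]
  calc _ ≤ 1 / (q ^ 2 * ‖τ‖) * (E * √(2 * q) * C) ^ 2 := by gcongr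
    _ = 2 * C ^ 2 / (q * ‖τ‖) * rexp (-(2 * (τ.im / normSq τ) * ρ ^ 2)) := by
      have hE2 : E ^ 2 = rexp (-(2 * (τ.im / normSq τ) * ρ ^ 2)) := by
        rw [hE, ← Real.exp_nat_mul]
        push_cast
        ring_nf
      rw [mul_pow, mul_pow, Real.sq_sqrt (by positivity), hE2]
      field_simp
    _ ≤ _ := by
      gcongr
      exact le_max_right _ _

end Theta

section FareyArc

open Complex

variable {Λ α : ℝ} {q : ℕ} {a : ℤ}

/-- The point of the upper half-plane at which theta series with Gaussian cutoff `Λ` and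
frequency `α` are evaluated. -/
def thetaParam (Λ α : ℝ) : ℂ := 2 * α + I / Λ ^ 2

lemma thetaParam_eq_rat_add (Λ α : ℝ) (q : ℕ) (a : ℤ) :
    thetaParam Λ α = 2 * (a / q) + thetaParam Λ (α - a / q) := by
  simp only [thetaParam]
  push_cast
  ring

lemma thetaParam_eq_mk (Λ α : ℝ) : thetaParam Λ α = ⟨2 * α, (Λ ^ 2)⁻¹⟩ := by
  rw [mk_eq_add_mul_I, thetaParam]
  push_cast
  ring

lemma thetaParam_im (Λ α : ℝ) : (thetaParam Λ α).im = (Λ ^ 2)⁻¹ := by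
  rw [thetaParam_eq_mk]

lemma normSq_thetaParam (hΛ : 0 < Λ) (α : ℝ) :
    normSq (thetaParam Λ α) = (1 + 4 * (Λ ^ 2 * |α|) ^ 2) / (Λ ^ 2) ^ 2 := by
  rw [thetaParam_eq_mk, normSq_mk, mul_pow _ |α|, sq_abs]
  field_simp
  ring

/-- The Farey arc of order `Λ` centred at `a / q`. -/
def fareyArc (Λ : ℝ) (q : ℕ) (a : ℤ) : Set ℝ := Metric.closedBall (a / q) (1 / (q * Λ))

/-- The distance from `α` to `a / q` in units of `Λ⁻²`, increased by one. -/
def arcDist (Λ : ℝ) (q : ℕ) (a : ℤ) (α : ℝ) : ℝ := 1 + Λ ^ 2 * |α - a / q|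

lemma one_le_arcDist (Λ : ℝ) (q : ℕ) (a : ℤ) (α : ℝ) : 1 ≤ arcDist Λ q a α :=
  le_add_of_nonneg_right (by positivity)

lemma arcDist_pos (Λ : ℝ) (q : ℕ) (a : ℤ) (α : ℝ) : 0 < arcDist Λ q a α :=
  one_pos.trans_le (one_le_arcDist Λ q a α)

lemma sq_mul_normSq_thetaParam_le (hq : 0 < q) (hqΛ : q ≤ Λ) (hα : α ∈ fareyArc Λ q a) :
    q ^ 2 * normSq (thetaParam Λ (α - a / q)) ≤ 5 * (thetaParam Λ (α - a / q)).im := by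
  have hq0 : (0 : ℝ) < q := by exact_mod_cast hq
  have hΛ : 0 < Λ := hq0.trans_le hqΛ
  rw [fareyArc, Metric.mem_closedBall, Real.dist_eq, le_div_iff₀ (by positivity)] at hα
  have hα2 : (|α - a / q| * (q * Λ)) ^ 2 ≤ 1 := pow_le_one₀ (by positivity) hα
  have hq2 : (q : ℝ) ^ 2 ≤ Λ ^ 2 := pow_le_pow_left₀ hq0.le hqΛ 2
  rw [normSq_thetaParam hΛ, thetaParam_im]
  generalize |α - a / q| = B at hα2
  rw [mul_div_assoc', div_le_iff₀ (by positivity)]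
  calc (q : ℝ) ^ 2 * (1 + 4 * (Λ ^ 2 * B) ^ 2)
      = q ^ 2 + 4 * (B * (q * Λ)) ^ 2 * Λ ^ 2 := by ring
    _ ≤ Λ ^ 2 + 4 * 1 * Λ ^ 2 := by gcongr
    _ = _ := by field_simp; norm_num

lemma le_im_div_normSq_thetaParam (hΛ : 0 < Λ) (q : ℕ) (a : ℤ) (α : ℝ) :
    Λ ^ 2 / (4 * arcDist Λ q a α ^ 2) ≤
      (thetaParam Λ (α - a / q)).im / normSq (thetaParam Λ (α - a / q)) := by
  have him : (thetaParam Λ (α - a / q)).im / normSq (thetaParam Λ (α - a / q)) =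
      Λ ^ 2 / (1 + 4 * (Λ ^ 2 * |α - a / q|) ^ 2) := by
    rw [normSq_thetaParam hΛ, thetaParam_im]
    field_simp
  rw [him, arcDist]
  gcongr
  nlinarith [show 0 ≤ Λ ^ 2 * |α - a / q| by positivity]

lemma arcDist_div_le_norm_thetaParam (hΛ : 0 < Λ) (q : ℕ) (a : ℤ) (α : ℝ) :
    arcDist Λ q a α / (2 * Λ ^ 2) ≤ ‖thetaParam Λ (α - a / q)‖ := by
  have hT := arcDist_pos Λ q a α
  refine (sq_le_sq₀ (by positivity) (norm_nonneg _)).mp ?_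
  rw [← normSq_eq_norm_sq, normSq_thetaParam hΛ, div_pow, mul_pow,
    div_le_div_iff₀ (by positivity) (by positivity), arcDist]
  have : (1 + Λ ^ 2 * |α - a / q|) ^ 2 ≤ (1 + 4 * (Λ ^ 2 * |α - a / q|) ^ 2) * 2 ^ 2 := by
    nlinarith [sq_nonneg (Λ ^ 2 * |α - a / q| - 1)]
  nlinarith [mul_le_mul_of_nonneg_right this (show 0 ≤ (Λ ^ 2) ^ 2 by positivity)]

theorem exists_norm_sq_jacobiTheta₂_thetaParam_le :
    ∃ C, 1 ≤ C ∧ ∀ (Λ : ℝ) (q : ℕ) (a : ℤ) (α x ρ : ℝ), 0 < q → q ≤ Λ → IsCoprime a (q : ℤ) →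
      α ∈ fareyArc Λ q a → 0 ≤ ρ → (∀ l : ℤ, ρ ≤ |x - l / q|) →
      ‖jacobiTheta₂ x (thetaParam Λ α)‖ ^ 2 ≤
        C * Λ ^ 2 / (q * arcDist Λ q a α) * rexp (-((Λ * ρ / arcDist Λ q a α) ^ 2 / 2)) := by
  obtain ⟨C, hC, hθ⟩ := exists_norm_sq_jacobiTheta₂_rat_add_le
  refine ⟨2 * C, by linarith, fun Λ q a α x ρ hq hqΛ ha hα hρ hx ↦ ?_⟩
  have hq0 : (0 : ℝ) < q := by exact_mod_cast hq
  have hΛ : 0 < Λ := hq0.trans_le hqΛ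
  have hT := arcDist_pos Λ q a α
  have norm_ge := arcDist_div_le_norm_thetaParam hΛ q a α
  have im_ge := le_im_div_normSq_thetaParam hΛ q a α
  rw [thetaParam_eq_rat_add Λ α q a]
  refine (hθ q a x ρ _ hq ha (by rw [thetaParam_im]; positivity)
    (sq_mul_normSq_thetaParam_le hq hqΛ hα) hρ hx).trans ?_
  calc _ ≤ C / (q * (arcDist Λ q a α / (2 * Λ ^ 2))) *
        rexp (-(2 * (Λ ^ 2 / (4 * arcDist Λ q a α ^ 2)) * ρ ^ 2)) := by gcongr
    _ = _ := by
      congr 1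
      · field_simp
      · congr 1
        field_simp
        ring

lemma exp_neg_half_sq_le {y : ℝ} (hy : 0 < y) : rexp (-(y ^ 2 / 2)) ≤ 2 * y ^ (-(3 / 2) : ℝ) := by
  have rpow_le : y ^ (3 / 2 : ℝ) ≤ 1 + y ^ 2 := by
    rcases le_total y 1 with h | h
    · exact (Real.rpow_le_one hy.le h (by norm_num)).trans (by nlinarith)
    · have := Real.rpow_le_rpow_of_exponent_le h (show (3 / 2 : ℝ) ≤ (2 : ℕ) by norm_num)
      rw [Real.rpow_natCast] at this
      linarith
  rw [Real.rpow_neg hy.le, ← div_eq_mul_inv, le_div_iff₀ (by positivity), Real.exp_neg,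
    inv_mul_le_iff₀ (Real.exp_pos _)]
  linarith [Real.add_one_le_exp (y ^ 2 / 2)]

end FareyArc

section NearRat

open Finset

variable {x δ B s : ℝ} {q q₀ m Q : ℕ} {F : Finset ℕ}

/-- `x` lies within `δ` of a fraction with denominator `q`. -/
def NearRat (x δ : ℝ) (q : ℕ) : Prop := ∃ l : ℤ, |x - l / q| ≤ δ

lemma NearRat.of_dvd (h : NearRat x δ q) (hqQ : q ∣ Q) (hQ : Q ≠ 0) : NearRat x δ Q := by
  obtain ⟨l, hl⟩ := h
  obtain ⟨m, rfl⟩ := hqQ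
  refine ⟨l * m, ?_⟩
  have hm : (m : ℝ) ≠ 0 := by exact_mod_cast right_ne_zero_of_mul hQ
  push_cast
  rwa [mul_div_mul_right _ _ hm]

lemma NearRat.dvd_of_minimal (h₀ : NearRat x δ q₀) (hq₀ : 0 < q₀)
    (hmin : ∀ q, 0 < q → NearRat x δ q → q₀ ≤ q) (h : NearRat x δ q) (hq : 0 < q)
    (hδ : 2 * δ * q ^ 2 < 1) : q₀ ∣ q := by
  have hle : (q₀ : ℝ) ≤ q := by exact_mod_cast hmin q hq h
  obtain ⟨⟨l₀, hl₀⟩, l, hl⟩ := h₀, h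
  have hqR : (0 : ℝ) < q := by exact_mod_cast hq
  have hq₀R : (0 : ℝ) < q₀ := by exact_mod_cast hq₀
  have hδ0 : 0 ≤ δ := (abs_nonneg _).trans hl
  have cross_lt : |((l * q₀ - l₀ * q : ℤ) : ℝ)| < 1 := calc
    _ = |((x - l₀ / q₀) - (x - l / q)) * (q * q₀)| := by
      congr 1
      push_cast
      field_simp
      ring
    _ = |(x - l₀ / q₀) - (x - l / q)| * (q * q₀) := by
      rw [abs_mul, abs_of_pos (mul_pos hqR hq₀R)]
    _ ≤ (δ + δ) * (q * q) := by
      gcongr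
      exact (abs_sub _ _).trans (add_le_add hl₀ hl)
    _ = 2 * δ * q ^ 2 := by ring
    _ < 1 := hδ
  have cross : l * q₀ = l₀ * q :=
    sub_eq_zero.mp (Int.abs_lt_one_iff.mp (by exact_mod_cast cross_lt))
  have hr : (l / q : ℚ) = l₀ / q₀ := by
    rw [div_eq_div_iff (by positivity) (by positivity)]
    exact_mod_cast cross
  have den_dvd : (l₀ / q₀ : ℚ).den ∣ q₀ := by exact_mod_cast Rat.den_dvd l₀ q₀
  have near_den : NearRat x δ (l₀ / q₀ : ℚ).den := by
    refine ⟨(l₀ / q₀ : ℚ).num, ?_⟩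
    rw [← Rat.cast_def]
    push_cast
    exact hl₀
  rw [← dvd_antisymm den_dvd ((hmin _ (Rat.den_pos _) near_den).antisymm
    (Nat.le_of_dvd hq₀ den_dvd) ▸ dvd_rfl), ← hr]
  exact_mod_cast Rat.den_dvd l q

lemma sum_rpow_neg_le_of_dvd (hs : 1 < s) (hq₀ : q₀ ≠ 0) (hF : ∀ q ∈ F, q₀ ∣ q) :
    ∑ q ∈ F, (q : ℝ) ^ (-s) ≤ (q₀ : ℝ) ^ (-s) * ∑' n : ℕ, (n : ℝ) ^ (-s) := by
  have inj : Set.InjOn (· / q₀) (F : Set ℕ) := fun a ha b hb hab ↦ by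
    rw [← Nat.mul_div_cancel' (hF a ha), ← Nat.mul_div_cancel' (hF b hb)]
    exact congrArg _ hab
  calc ∑ q ∈ F, (q : ℝ) ^ (-s)
      = ∑ q ∈ F, (q₀ : ℝ) ^ (-s) * ((q / q₀ : ℕ) : ℝ) ^ (-s) := by
        refine sum_congr rfl fun q hq ↦ ?_
        rw [← Real.mul_rpow (by positivity) (by positivity), ← Nat.cast_mul,
          Nat.mul_div_cancel' (hF q hq)]
    _ = (q₀ : ℝ) ^ (-s) * ∑ n ∈ F.image (· / q₀), (n : ℝ) ^ (-s) := by
        rw [← mul_sum, sum_image inj]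
    _ ≤ _ := by
        gcongr
        exact (Real.summable_nat_rpow.mpr (by linarith)).sum_le_tsum _ fun n _ ↦ by positivity

lemma sum_rpow_neg_nearRat_le (hs : 1 < s) (hm : 0 < m) (hdvd : ∀ n ∈ Icc 1 m, n ∣ Q)
    (hQ : Q ≠ 0) (hx : ¬NearRat x δ Q)
    (hF : ∀ q ∈ F, 0 < q ∧ NearRat x δ q ∧ 2 * δ * q ^ 2 < 1) :
    ∑ q ∈ F, (q : ℝ) ^ (-s) ≤ (m : ℝ) ^ (-s) * ∑' n : ℕ, (n : ℝ) ^ (-s) := by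
  classical
  have : 0 ≤ ∑' n : ℕ, (n : ℝ) ^ (-s) := tsum_nonneg fun n ↦ by positivity
  rcases F.eq_empty_or_nonempty with rfl | ⟨q, hq⟩
  · rw [sum_empty]
    positivity
  have exists_near : ∃ q, 0 < q ∧ NearRat x δ q := ⟨q, (hF q hq).1, (hF q hq).2.1⟩
  obtain ⟨hq₀, near⟩ := Nat.find_spec exists_near
  have lt_find : m < Nat.find exists_near := by
    by_contra! hle
    exact hx (near.of_dvd (hdvd _ (mem_Icc.mpr ⟨hq₀, hle⟩)) hQ)
  refine (sum_rpow_neg_le_of_dvd hs hq₀.ne' fun q hq ↦ ?_).trans ?_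
  · exact near.dvd_of_minimal hq₀ (fun n h0 hn ↦ Nat.find_min' exists_near ⟨h0, hn⟩)
      (hF q hq).2.1 (hF q hq).1 (hF q hq).2.2
  · gcongr ?_ * _
    exact Real.rpow_le_rpow_of_nonpos (by exact_mod_cast hm) (by exact_mod_cast lt_find.le)
      (by linarith)

lemma rpow_neg_three_halves_le (hδ : 0 ≤ δ) (hq : 0 < q) (h : 1 ≤ δ * q ^ 2) :
    (q : ℝ) ^ (-(3 / 2) : ℝ) ≤ δ ^ (1 / 8 : ℝ) * (q : ℝ) ^ (-(5 / 4) : ℝ) := by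
  have hq0 : (0 : ℝ) < q := by exact_mod_cast hq
  calc (q : ℝ) ^ (-(3 / 2) : ℝ)
      ≤ (δ * q ^ 2) ^ (1 / 8 : ℝ) * (q : ℝ) ^ (-(3 / 2) : ℝ) :=
        le_mul_of_one_le_left (by positivity) (Real.one_le_rpow h (by norm_num))
    _ = δ ^ (1 / 8 : ℝ) * (q : ℝ) ^ (-(5 / 4) : ℝ) := by
        rw [Real.mul_rpow hδ (by positivity), ← Real.rpow_natCast, ← Real.rpow_mul hq0.le,
          mul_assoc, ← Real.rpow_add hq0]
        norm_num

open Classical in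
theorem exists_sum_rpow_mul_ite_nearRat_le :
    ∃ C > 0, ∀ (x δ B : ℝ) (m Q : ℕ) (F : Finset ℕ), 0 ≤ δ → 0 ≤ B → 0 < m →
      (∀ n ∈ Icc 1 m, n ∣ Q) → Q ≠ 0 → ¬NearRat x δ Q → (∀ q ∈ F, 0 < q) →
      ∑ q ∈ F, (q : ℝ) ^ (-(3 / 2) : ℝ) * (if NearRat x δ q then 1 else B) ≤
        C * ((m : ℝ) ^ (-(3 / 2) : ℝ) + (2 * δ) ^ (1 / 8 : ℝ) + B) := by
  set Z : ℝ → ℝ := fun s ↦ ∑' n : ℕ, (n : ℝ) ^ (-s)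
  have Z_nonneg (s : ℝ) : 0 ≤ Z s := tsum_nonneg fun n ↦ by positivity
  have sum_le {s : ℝ} (hs : 1 < s) (F : Finset ℕ) : ∑ q ∈ F, (q : ℝ) ^ (-s) ≤ Z s := by
    simpa using sum_rpow_neg_le_of_dvd hs one_ne_zero fun q _ ↦ one_dvd q
  refine ⟨1 + Z (3 / 2) + Z (5 / 4), by linarith [Z_nonneg (3 / 2), Z_nonneg (5 / 4)],
    fun x δ B m Q F hδ hB hm hdvd hQ hx hF ↦ ?_⟩
  have small := sum_rpow_neg_nearRat_le (s := 3 / 2) (by norm_num) hm hdvd hQ hx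
    (F := F.filter fun q ↦ NearRat x δ q ∧ 2 * δ * q ^ 2 < 1)
    fun q hq ↦ ⟨hF q (mem_filter.mp hq).1, (mem_filter.mp hq).2⟩
  have large : ∑ q ∈ F.filter fun q : ℕ ↦ 1 ≤ 2 * δ * q ^ 2, (q : ℝ) ^ (-(3 / 2) : ℝ) ≤
      (2 * δ) ^ (1 / 8 : ℝ) * Z (5 / 4) := by
    refine (sum_le_sum fun q hq ↦ rpow_neg_three_halves_le (by positivity)
      (hF q (mem_filter.mp hq).1) (mem_filter.mp hq).2).trans ?_
    rw [← mul_sum]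
    gcongr
    exact sum_le (by norm_num) _
  have split_le : ∀ q ∈ F, (q : ℝ) ^ (-(3 / 2) : ℝ) * (if NearRat x δ q then 1 else B) ≤
      (q : ℝ) ^ (-(3 / 2) : ℝ) * B
        + (if NearRat x δ q ∧ 2 * δ * q ^ 2 < 1 then (q : ℝ) ^ (-(3 / 2) : ℝ) else 0)
        + (if 1 ≤ 2 * δ * q ^ 2 then (q : ℝ) ^ (-(3 / 2) : ℝ) else 0) := fun q _ ↦ by
    have pow_nonneg : 0 ≤ (q : ℝ) ^ (-(3 / 2) : ℝ) := by positivity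
    have := mul_nonneg pow_nonneg hB
    by_cases hlt : 2 * δ * q ^ 2 < 1 <;> by_cases hnear : NearRat x δ q <;>
      simp only [← not_lt, hlt, hnear, not_true, not_false_iff, if_true, if_false, and_true,
        and_false] <;> linarith
  refine (sum_le_sum split_le).trans ?_
  rw [sum_add_distrib, sum_add_distrib, ← sum_mul, ← sum_filter, ← sum_filter]
  have hmB := mul_le_mul_of_nonneg_right (sum_le (s := 3 / 2) (by norm_num) F) hB
  have : 0 ≤ (m : ℝ) ^ (-(3 / 2) : ℝ) := by positivity
  have : 0 ≤ (2 * δ) ^ (1 / 8 : ℝ) := by positivity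
  nlinarith [Z_nonneg (3 / 2), Z_nonneg (5 / 4)]

end NearRat

section FareyWeight

open Finset MeasureTheory

variable {d q : ℕ} {a : ℤ} {Λ α : ℝ}

/-- The fractions `a / q` in `[0, 1]` in lowest terms with `q ≤ Λ`, as pairs `⟨q, a⟩`. -/
def fareyPairs (Λ : ℝ) : Finset (Σ _ : ℕ, ℤ) :=
  (Icc 1 ⌊Λ⌋₊).sigma fun q ↦ {a ∈ Icc (0 : ℤ) q | a.gcd q = 1}

lemma mem_fareyPairs {i : Σ _ : ℕ, ℤ} : i ∈ fareyPairs Λ ↔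
    (1 ≤ i.1 ∧ i.1 ≤ ⌊Λ⌋₊) ∧ (0 ≤ i.2 ∧ i.2 ≤ i.1) ∧ i.2.gcd i.1 = 1 := by
  simp only [fareyPairs, mem_sigma, mem_filter, mem_Icc]

lemma exists_mem_fareyArc (hΛ : 1 ≤ Λ) (hα : α ∈ Set.Icc 0 1) :
    ∃ i ∈ fareyPairs Λ, α ∈ fareyArc Λ i.1 i.2 := by
  obtain ⟨r, hr, hden⟩ := Real.exists_rat_abs_sub_le_and_den_le α (Nat.floor_pos.mpr hΛ)
  have den_pos : (0 : ℝ) < r.den := by exact_mod_cast r.den_pos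
  have hΛ0 : 0 < Λ := one_pos.trans_le hΛ
  have hfloor : Λ < ⌊Λ⌋₊ + 1 := Nat.lt_floor_add_one Λ
  rw [Rat.cast_def] at hr
  have num_near : |r.den * α - r.num| < 1 := calc
    _ = r.den * |α - r.num / r.den| := by
      rw [← abs_of_pos den_pos, ← abs_mul, abs_of_pos den_pos, mul_sub,
        mul_div_cancel₀ _ den_pos.ne']
    _ ≤ r.den * (1 / ((⌊Λ⌋₊ + 1) * r.den)) := by gcongr
    _ = 1 / (⌊Λ⌋₊ + 1) := by field_simp
    _ < 1 := by rw [div_lt_one (by positivity)]; linarith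
  rw [abs_lt] at num_near
  refine ⟨⟨r.den, r.num⟩, mem_fareyPairs.mpr ⟨⟨r.den_pos, hden⟩, ⟨?_, ?_⟩, r.reduced⟩, ?_⟩
  · have : (-1 : ℝ) < r.num := by linarith [mul_nonneg den_pos.le hα.1]
    exact Int.add_one_le_iff.mpr (by exact_mod_cast this)
  · have : (r.num : ℝ) < r.den + 1 := by linarith [mul_le_mul_of_nonneg_left hα.2 den_pos.le]
    exact Int.lt_add_one_iff.mp (by exact_mod_cast this)
  · rw [fareyArc, Metric.mem_closedBall, Real.dist_eq, mul_comm (r.den : ℝ)]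
    exact hr.trans (by gcongr)

/-- The weight on the Farey arc at `a / q` which balances the two sides of the Cauchy–Schwarz
inequality: its inverse is summable over all arcs, with total integral `O(Λ⁻²)`. -/
def arcWeight (Λ : ℝ) (q : ℕ) (a : ℤ) (α : ℝ) : ℝ :=
  (q : ℝ) ^ (5 / 2 : ℝ) * arcDist Λ q a α ^ (3 / 2 : ℝ)

lemma arcWeight_pos (hq : 0 < q) (Λ : ℝ) (a : ℤ) (α : ℝ) : 0 < arcWeight Λ q a α := by
  have := arcDist_pos Λ q a α
  unfold arcWeight
  positivity

@[fun_prop]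
lemma measurable_arcWeight (Λ : ℝ) (q : ℕ) (a : ℤ) : Measurable (arcWeight Λ q a) := by
  unfold arcWeight arcDist
  fun_prop

lemma exists_lintegral_one_add_sq_mul_abs_rpow_le :
    ∃ C > 0, ∀ Λ c : ℝ, 0 < Λ →
      ∫⁻ α : ℝ, .ofReal ((1 + Λ ^ 2 * |α - c|) ^ (-(3 / 2) : ℝ)) ≤ .ofReal (C / Λ ^ 2) := by
  have integrable : Integrable fun x : ℝ ↦ (1 + ‖x‖) ^ (-(3 / 2) : ℝ) :=
    integrable_one_add_norm (by norm_num)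
  refine ⟨max 1 (∫ x : ℝ, (1 + ‖x‖) ^ (-(3 / 2) : ℝ)), by positivity, fun Λ c hΛ ↦ ?_⟩
  have hΛ2 : 0 < Λ ^ 2 := by positivity
  have hscale : (fun x : ℝ ↦ (1 + Λ ^ 2 * |x|) ^ (-(3 / 2) : ℝ)) =
      fun x ↦ (1 + ‖Λ ^ 2 * x‖) ^ (-(3 / 2) : ℝ) := by
    simp only [Real.norm_eq_abs, abs_mul, abs_of_pos hΛ2]
  rw [lintegral_sub_right_eq_self
      (fun α : ℝ ↦ ENNReal.ofReal ((1 + Λ ^ 2 * |α|) ^ (-(3 / 2) : ℝ))) c,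
    ← ofReal_integral_eq_lintegral_ofReal (hscale ▸ integrable.comp_mul_left' hΛ2.ne')
      (ae_of_all _ fun x ↦ by positivity), hscale,
    Measure.integral_comp_mul_left (fun x : ℝ ↦ (1 + ‖x‖) ^ (-(3 / 2) : ℝ)),
    abs_of_pos (inv_pos.mpr hΛ2), smul_eq_mul, div_eq_inv_mul _ (Λ ^ 2)]
  gcongr
  exact le_max_right _ _

lemma exists_lintegral_inv_arcWeight_le :
    ∃ C > 0, ∀ (Λ : ℝ) (q : ℕ) (a : ℤ), 0 < Λ →
      ∫⁻ α, .ofReal (arcWeight Λ q a α)⁻¹ ≤ .ofReal ((q : ℝ) ^ (-(5 / 2) : ℝ) * (C / Λ ^ 2)) := by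
  obtain ⟨C, hC, h⟩ := exists_lintegral_one_add_sq_mul_abs_rpow_le
  refine ⟨C, hC, fun Λ q a hΛ ↦ ?_⟩
  have inv_eq (α : ℝ) : .ofReal (arcWeight Λ q a α)⁻¹ = ENNReal.ofReal ((q : ℝ) ^ (-(5 / 2) : ℝ)) *
      .ofReal ((1 + Λ ^ 2 * |α - a / q|) ^ (-(3 / 2) : ℝ)) := by
    rw [← ENNReal.ofReal_mul (by positivity), arcWeight, mul_inv, ← Real.rpow_neg (by positivity),
      ← Real.rpow_neg (arcDist_pos Λ q a α).le, arcDist]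
  simp_rw [inv_eq]
  rw [lintegral_const_mul' _ _ ENNReal.ofReal_ne_top, ENNReal.ofReal_mul (by positivity)]
  gcongr
  exact h Λ _ hΛ

theorem exists_sum_fareyPairs_lintegral_inv_arcWeight_le :
    ∃ C > 0, ∀ (Λ : ℝ) (η : ℕ → ℝ), 0 < Λ → (∀ q, 0 ≤ η q) →
      ∑ i ∈ fareyPairs Λ, .ofReal (η i.1) * ∫⁻ α, .ofReal (arcWeight Λ i.1 i.2 α)⁻¹ ≤
        .ofReal (C / Λ ^ 2 * ∑ q ∈ Icc 1 ⌊Λ⌋₊, (q : ℝ) ^ (-(3 / 2) : ℝ) * η q) := by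
  obtain ⟨C, hC, h⟩ := exists_lintegral_inv_arcWeight_le
  refine ⟨2 * C, by positivity, fun Λ η hΛ hη ↦ ?_⟩
  calc ∑ i ∈ fareyPairs Λ, .ofReal (η i.1) * ∫⁻ α, .ofReal (arcWeight Λ i.1 i.2 α)⁻¹
      ≤ ∑ i ∈ fareyPairs Λ, .ofReal (η i.1 * ((i.1 : ℝ) ^ (-(5 / 2) : ℝ) * (C / Λ ^ 2))) := by
        gcongr with i _
        rw [ENNReal.ofReal_mul (hη _)]
        gcongr
        exact h Λ i.1 i.2 hΛ
    _ = .ofReal (∑ i ∈ fareyPairs Λ, η i.1 * ((i.1 : ℝ) ^ (-(5 / 2) : ℝ) * (C / Λ ^ 2))) :=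
        (ENNReal.ofReal_sum_of_nonneg fun i _ ↦ mul_nonneg (hη _) (by positivity)).symm
    _ ≤ _ := ENNReal.ofReal_le_ofReal ?_
  rw [fareyPairs, sum_sigma, mul_sum]
  refine sum_le_sum fun q hq ↦ ?_
  have hq1 : (1 : ℝ) ≤ q := by exact_mod_cast (mem_Icc.mp hq).1
  have card_le : (#{a ∈ Icc (0 : ℤ) q | a.gcd q = 1} : ℝ) ≤ 2 * q := by
    have : #{a ∈ Icc (0 : ℤ) q | a.gcd q = 1} ≤ q + 1 := (card_filter_le _ _).trans (by simp)
    have : (#{a ∈ Icc (0 : ℤ) q | a.gcd q = 1} : ℝ) ≤ q + 1 := by exact_mod_cast this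
    linarith
  have rpow_eq : (q : ℝ) ^ (-(3 / 2) : ℝ) = q * (q : ℝ) ^ (-(5 / 2) : ℝ) := by
    rw [← Real.rpow_one_add' (by positivity) (by norm_num)]
    norm_num
  simp only [sum_const, nsmul_eq_mul, rpow_eq]
  calc _ ≤ 2 * (q : ℝ) * (η q * ((q : ℝ) ^ (-(5 / 2) : ℝ) * (C / Λ ^ 2))) := by
        gcongr
        exact mul_nonneg (hη _) (by positivity)
    _ = _ := by ring

/-- The sum of the weights of all Farey arcs containing `α`. -/
def fareyWeight (Λ α : ℝ) : ℝ≥0∞ :=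
  ∑ i ∈ fareyPairs Λ, (fareyArc Λ i.1 i.2).indicator (fun α ↦ .ofReal (arcWeight Λ i.1 i.2 α)) α

lemma measurableSet_fareyArc (Λ : ℝ) (q : ℕ) (a : ℤ) : MeasurableSet (fareyArc Λ q a) :=
  Metric.isClosed_closedBall.measurableSet

@[fun_prop]
lemma measurable_fareyWeight (Λ : ℝ) : Measurable (fareyWeight Λ) :=
  Finset.measurable_sum _ fun _ _ ↦
    (measurable_arcWeight _ _ _).ennreal_ofReal.indicator (measurableSet_fareyArc _ _ _)

lemma fareyWeight_ne_top (Λ α : ℝ) : fareyWeight Λ α ≠ ⊤ :=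
  ENNReal.sum_ne_top.mpr fun i _ ↦ ((Set.indicator_le_self _
    (fun α ↦ ENNReal.ofReal (arcWeight Λ i.1 i.2 α)) α).trans_lt ENNReal.ofReal_lt_top).ne

lemma exists_arcWeight_le_fareyWeight (hΛ : 1 ≤ Λ) (hα : α ∈ Set.Icc 0 1) :
    ∃ i ∈ fareyPairs Λ, .ofReal (arcWeight Λ i.1 i.2 α) ≤ fareyWeight Λ α := by
  obtain ⟨i, hi, hαi⟩ := exists_mem_fareyArc hΛ hα
  refine ⟨i, hi, ?_⟩
  rw [← Set.indicator_of_mem hαi fun α ↦ ENNReal.ofReal (arcWeight Λ i.1 i.2 α)]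
  exact single_le_sum (f := fun i : Σ _ : ℕ, ℤ ↦
    (fareyArc Λ i.1 i.2).indicator (fun α ↦ ENNReal.ofReal (arcWeight Λ i.1 i.2 α)) α)
    (fun _ _ ↦ zero_le) hi

lemma fareyWeight_ne_zero (hΛ : 1 ≤ Λ) (hα : α ∈ Set.Icc 0 1) : fareyWeight Λ α ≠ 0 := by
  obtain ⟨i, hi, hle⟩ := exists_arcWeight_le_fareyWeight hΛ hα
  exact ((ENNReal.ofReal_pos.mpr (arcWeight_pos (mem_fareyPairs.mp hi).1.1 Λ _ α)).trans_le hle).ne'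

theorem exists_lintegral_inv_fareyWeight_le :
    ∃ C > 0, ∀ Λ : ℝ, 1 ≤ Λ →
      ∫⁻ α in Set.Icc 0 1, (fareyWeight Λ α)⁻¹ ≤ .ofReal (C / Λ ^ 2) := by
  obtain ⟨C, hC, h⟩ := exists_sum_fareyPairs_lintegral_inv_arcWeight_le
  have summable := Real.summable_nat_rpow.mpr (show (-(3 / 2) : ℝ) < -1 by norm_num)
  refine ⟨C * (1 + ∑' n : ℕ, (n : ℝ) ^ (-(3 / 2) : ℝ)), mul_pos hC
    (add_pos_of_pos_of_nonneg one_pos (tsum_nonneg fun n ↦ by positivity)), fun Λ hΛ ↦ ?_⟩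
  have inv_le : ∀ α ∈ Set.Icc (0 : ℝ) 1, (fareyWeight Λ α)⁻¹ ≤
      ∑ i ∈ fareyPairs Λ, .ofReal (arcWeight Λ i.1 i.2 α)⁻¹ := fun α hα ↦ by
    obtain ⟨i, hi, hle⟩ := exists_arcWeight_le_fareyWeight hΛ hα
    rw [← ENNReal.inv_le_inv, ← ENNReal.ofReal_inv_of_pos
      (arcWeight_pos (mem_fareyPairs.mp hi).1.1 Λ _ α)] at hle
    exact hle.trans (single_le_sum (f := fun i : Σ _ : ℕ, ℤ ↦
      ENNReal.ofReal (arcWeight Λ i.1 i.2 α)⁻¹) (fun _ _ ↦ zero_le) hi)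
  calc ∫⁻ α in Set.Icc 0 1, (fareyWeight Λ α)⁻¹
      ≤ ∫⁻ α, ∑ i ∈ fareyPairs Λ, .ofReal (arcWeight Λ i.1 i.2 α)⁻¹ :=
        (setLIntegral_mono' measurableSet_Icc inv_le).trans (setLIntegral_le_lintegral _ _)
    _ = ∑ i ∈ fareyPairs Λ, ∫⁻ α, .ofReal (arcWeight Λ i.1 i.2 α)⁻¹ :=
        lintegral_finsetSum _ fun _ _ ↦ by fun_prop
    _ ≤ .ofReal (C / Λ ^ 2 * ∑ q ∈ Icc 1 ⌊Λ⌋₊, (q : ℝ) ^ (-(3 / 2) : ℝ)) := by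
        simpa using h Λ (fun _ ↦ 1) (by positivity) fun _ ↦ zero_le_one
    _ ≤ _ := by
        rw [mul_div_right_comm]
        gcongr
        linarith [summable.sum_le_tsum (Icc 1 ⌊Λ⌋₊) fun n _ ↦ by positivity]

/-- The gain, at the denominator `q`, in the bound for a theta series with Gaussian cutoff `Λ`
at `x`: there is none if `x` is within `ρ` of a fraction with denominator `q`. -/
def thetaGain (Λ ρ x : ℝ) (q : ℕ) : ℝ :=
  open Classical in if NearRat x ρ q then 1 else (Λ * ρ) ^ (-(3 / 2) : ℝ)

lemma thetaGain_nonneg {ρ : ℝ} (hΛ : 0 ≤ Λ) (hρ : 0 ≤ ρ) (x : ℝ) (q : ℕ) :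
    0 ≤ thetaGain Λ ρ x q := by
  unfold thetaGain
  split_ifs <;> positivity

lemma exists_norm_sq_jacobiTheta₂_thetaParam_le_thetaGain :
    ∃ C, 1 ≤ C ∧ ∀ (Λ : ℝ) (q : ℕ) (a : ℤ) (α x ρ : ℝ), 0 < q → q ≤ Λ → a.gcd q = 1 →
      α ∈ fareyArc Λ q a → 0 < ρ →
      ‖jacobiTheta₂ x (thetaParam Λ α)‖ ^ 2 ≤ C * Λ ^ 2 / (q * arcDist Λ q a α) ∧
      ‖jacobiTheta₂ x (thetaParam Λ α)‖ ^ 2 ≤ C * Λ ^ 2 / (q * arcDist Λ q a α) *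
        (2 * arcDist Λ q a α ^ (3 / 2 : ℝ) * thetaGain Λ ρ x q) := by
  obtain ⟨C, hC, h⟩ := exists_norm_sq_jacobiTheta₂_thetaParam_le
  refine ⟨C, hC, fun Λ q a α x ρ hq hqΛ ha hα hρ ↦ ?_⟩
  rw [← Int.isCoprime_iff_gcd_eq_one] at ha
  have hT := arcDist_pos Λ q a α
  have hΛ : 0 < Λ := (Nat.cast_pos.mpr hq).trans_le hqΛ
  have no_gain : ‖jacobiTheta₂ x (thetaParam Λ α)‖ ^ 2 ≤
      C * Λ ^ 2 / (q * arcDist Λ q a α) := by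
    simpa using h Λ q a α x 0 hq hqΛ ha hα le_rfl fun _ ↦ abs_nonneg _
  refine ⟨no_gain, ?_⟩
  unfold thetaGain
  split_ifs with hx
  · refine no_gain.trans (le_mul_of_one_le_right (by positivity) ?_)
    linarith [Real.one_le_rpow (one_le_arcDist Λ q a α) (show (0 : ℝ) ≤ 3 / 2 by norm_num)]
  · refine (h Λ q a α x ρ hq hqΛ ha hα hρ.le fun l ↦ ?_).trans ?_
    · exact le_of_not_ge fun hl ↦ hx ⟨l, hl⟩
    · gcongr
      refine (exp_neg_half_sq_le (by positivity)).trans_eq ?_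
      rw [Real.div_rpow (by positivity) hT.le, Real.rpow_neg hT.le, div_inv_eq_mul]
      ring

theorem exists_arcWeight_sq_mul_prod_le (hd : 5 ≤ d) :
    ∃ C > 0, ∀ (Λ : ℝ) (q : ℕ) (a : ℤ) (α ρ : ℝ) (t : Fin d → ℝ) (i : Fin d),
      0 < q → q ≤ Λ → a.gcd q = 1 → α ∈ fareyArc Λ q a → 0 < ρ →
      arcWeight Λ q a α ^ 2 * ∏ l, ‖jacobiTheta₂ (t l) (thetaParam Λ α)‖ ^ 2 ≤
        C * Λ ^ (2 * d) * thetaGain Λ ρ (t i) q := by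
  obtain ⟨C, hC, h⟩ := exists_norm_sq_jacobiTheta₂_thetaParam_le_thetaGain
  refine ⟨2 * C ^ d, by positivity, fun Λ q a α ρ t i hq hqΛ ha hα hρ ↦ ?_⟩
  have hT1 := one_le_arcDist Λ q a α
  have hq1 : (1 : ℝ) ≤ q := by exact_mod_cast hq
  have hΛ : 0 < Λ := by linarith
  have gain_nonneg := thetaGain_nonneg hΛ.le hρ.le (t i) q
  have weight_sq : arcWeight Λ q a α ^ 2 = q ^ 5 * arcDist Λ q a α ^ 3 := by
    rw [arcWeight, mul_pow, ← Real.rpow_mul_natCast (by positivity),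
      ← Real.rpow_mul_natCast (by positivity)]
    norm_num
  rw [weight_sq]
  set T := arcDist Λ q a α
  have prod_le : ∏ l, ‖jacobiTheta₂ (t l) (thetaParam Λ α)‖ ^ 2 ≤
      (C * Λ ^ 2 / (q * T)) ^ d * (2 * T ^ (3 / 2 : ℝ) * thetaGain Λ ρ (t i) q) := by
    have erase_le := prod_le_prod (s := univ.erase i) (fun _ _ ↦ by positivity)
      fun l _ ↦ (h Λ q a α (t l) ρ hq hqΛ ha hα hρ).1
    rw [prod_const, card_erase_of_mem (mem_univ _), card_univ, Fintype.card_fin] at erase_le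
    rw [← prod_erase_mul _ _ (mem_univ i), ← pow_sub_one_mul (show d ≠ 0 by lia), mul_assoc]
    exact mul_le_mul erase_le (h Λ q a α (t i) ρ hq hqΛ ha hα hρ).2 (by positivity)
      (by positivity)
  have decay_le : (q : ℝ) ^ 5 * T ^ 3 * T ^ (3 / 2 : ℝ) ≤ (q * T) ^ d := calc
    (q : ℝ) ^ 5 * T ^ 3 * T ^ (3 / 2 : ℝ) ≤ q ^ 5 * T ^ 3 * T ^ (2 : ℝ) := by
      gcongr
      norm_num
    _ = (q * T) ^ 5 := by
      rw [Real.rpow_two]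
      ring
    _ ≤ (q * T) ^ d := pow_le_pow_right₀ (one_le_mul_of_one_le_of_one_le hq1 hT1) hd
  calc _ ≤ (q : ℝ) ^ 5 * T ^ 3 *
        ((C * Λ ^ 2 / (q * T)) ^ d * (2 * T ^ (3 / 2 : ℝ) * thetaGain Λ ρ (t i) q)) := by gcongr
    _ = 2 * C ^ d * Λ ^ (2 * d) * thetaGain Λ ρ (t i) q *
        ((q : ℝ) ^ 5 * T ^ 3 * T ^ (3 / 2 : ℝ) / (q * T) ^ d) := by
      rw [div_pow, mul_pow, ← pow_mul]
      ring
    _ ≤ 2 * C ^ d * Λ ^ (2 * d) * thetaGain Λ ρ (t i) q :=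
      mul_le_of_le_one_right (by positivity) (div_le_one_of_le₀ decay_le (by positivity))

theorem exists_lintegral_fareyWeight_mul_le :
    ∃ C > 0, ∀ (Λ : ℝ) (g : ℝ → ℝ) (η : ℕ → ℝ), 0 < Λ → (∀ q, 0 ≤ η q) →
      (∀ (q : ℕ) (a : ℤ) (α : ℝ), 0 < q → q ≤ Λ → a.gcd q = 1 → α ∈ fareyArc Λ q a →
        arcWeight Λ q a α ^ 2 * g α ≤ η q) →
      ∫⁻ α, fareyWeight Λ α * .ofReal (g α) ≤
        .ofReal (C / Λ ^ 2 * ∑ q ∈ Icc 1 ⌊Λ⌋₊, (q : ℝ) ^ (-(3 / 2) : ℝ) * η q) := by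
  obtain ⟨C, hC, farey_sum⟩ := exists_sum_fareyPairs_lintegral_inv_arcWeight_le
  refine ⟨C, hC, fun Λ g η hΛ hη hg ↦ ?_⟩
  have arc_le : ∀ p ∈ fareyPairs Λ, ∀ α, (fareyArc Λ p.1 p.2).indicator
      (fun α ↦ ENNReal.ofReal (arcWeight Λ p.1 p.2 α)) α * ENNReal.ofReal (g α) ≤
      ENNReal.ofReal (η p.1) * ENNReal.ofReal (arcWeight Λ p.1 p.2 α)⁻¹ := fun p hp α ↦ by
    obtain ⟨⟨hq, hqΛ⟩, -, hgcd⟩ := mem_fareyPairs.mp hp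
    by_cases hα : α ∈ fareyArc Λ p.1 p.2
    · have hw := arcWeight_pos hq Λ p.2 α
      have := hg p.1 p.2 α hq (Nat.le_floor_iff hΛ.le |>.mp hqΛ) hgcd hα
      rw [Set.indicator_of_mem hα, ← ENNReal.ofReal_mul hw.le, ← ENNReal.ofReal_mul (hη _)]
      refine ENNReal.ofReal_le_ofReal ?_
      rwa [← div_eq_mul_inv, le_div_iff₀ hw, mul_right_comm, ← sq]
    · rw [Set.indicator_of_notMem hα, zero_mul]
      exact zero_le
  calc ∫⁻ α, fareyWeight Λ α * .ofReal (g α)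
      ≤ ∫⁻ α, ∑ p ∈ fareyPairs Λ, .ofReal (η p.1) * .ofReal (arcWeight Λ p.1 p.2 α)⁻¹ := by
        refine lintegral_mono fun α ↦ ?_
        rw [fareyWeight, sum_mul]
        exact sum_le_sum fun p hp ↦ arc_le p hp α
    _ = ∑ p ∈ fareyPairs Λ, .ofReal (η p.1) * ∫⁻ α, .ofReal (arcWeight Λ p.1 p.2 α)⁻¹ := by
        rw [lintegral_finsetSum _ fun _ _ ↦ by fun_prop]
        exact sum_congr rfl fun p _ ↦ lintegral_const_mul' _ _ ENNReal.ofReal_ne_top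
    _ ≤ _ := farey_sum Λ η hΛ hη

/-- Only denominators near which all coordinates of `t` are rational fail to produce a gain; by
`NearRat.dvd_of_minimal` these are sparse as soon as `Q` is not one of them. -/
theorem exists_lintegral_fareyWeight_mul_prod_le (hd : 5 ≤ d) :
    ∃ C > 0, ∀ (Λ ρ : ℝ) (m Q : ℕ) (t : Fin d → ℝ) (i : Fin d), 1 ≤ Λ → 0 < ρ → 0 < m →
      (∀ n ∈ Icc 1 m, n ∣ Q) → Q ≠ 0 → ¬NearRat (t i) ρ Q →
      ∫⁻ α, fareyWeight Λ α * ∏ l, ‖jacobiTheta₂ (t l) (thetaParam Λ α)‖ₑ ^ 2 ≤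
        .ofReal (C * Λ ^ (2 * d) / Λ ^ 2 *
          ((m : ℝ) ^ (-(3 / 2) : ℝ) + (2 * ρ) ^ (1 / 8 : ℝ) + (Λ * ρ) ^ (-(3 / 2) : ℝ))) := by
  obtain ⟨C₁, hC₁, farey_le⟩ := exists_lintegral_fareyWeight_mul_le
  obtain ⟨C₂, hC₂, pointwise⟩ := exists_arcWeight_sq_mul_prod_le hd
  obtain ⟨C₃, hC₃, gain_sum⟩ := exists_sum_rpow_mul_ite_nearRat_le
  refine ⟨C₁ * C₂ * C₃, by positivity, fun Λ ρ m Q t i hΛ hρ hm hdvd hQ ht ↦ ?_⟩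
  have hΛ0 : 0 < Λ := by linarith
  have gain_le := gain_sum (t i) ρ ((Λ * ρ) ^ (-(3 / 2) : ℝ)) m Q (Icc 1 ⌊Λ⌋₊) hρ.le (by positivity)
    hm hdvd hQ ht fun q hq ↦ (mem_Icc.mp hq).1
  simp_rw [← ofReal_norm, ← ENNReal.ofReal_pow (norm_nonneg _)]
  simp_rw [← ENNReal.ofReal_prod_of_nonneg fun _ _ ↦ sq_nonneg _]
  refine (farey_le Λ _ (fun q ↦ C₂ * Λ ^ (2 * d) * thetaGain Λ ρ (t i) q) hΛ0
    (fun q ↦ mul_nonneg (by positivity) (thetaGain_nonneg hΛ0.le hρ.le _ _))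
    fun q a α hq hqΛ ha hα ↦ pointwise Λ q a α ρ t i hq hqΛ ha hα hρ).trans
    (ENNReal.ofReal_le_ofReal ?_)
  calc C₁ / Λ ^ 2 *
        ∑ q ∈ Icc 1 ⌊Λ⌋₊, (q : ℝ) ^ (-(3 / 2) : ℝ) * (C₂ * Λ ^ (2 * d) * thetaGain Λ ρ (t i) q)
      = C₁ / Λ ^ 2 * (C₂ * Λ ^ (2 * d)) *
          ∑ q ∈ Icc 1 ⌊Λ⌋₊, (q : ℝ) ^ (-(3 / 2) : ℝ) * thetaGain Λ ρ (t i) q := by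
        rw [mul_assoc, mul_sum (a := C₂ * Λ ^ (2 * d))]
        simp only [mul_left_comm]
    _ ≤ C₁ / Λ ^ 2 * (C₂ * Λ ^ (2 * d)) * (C₃ *
          ((m : ℝ) ^ (-(3 / 2) : ℝ) + (2 * ρ) ^ (1 / 8 : ℝ) + (Λ * ρ) ^ (-(3 / 2) : ℝ))) := by
        gcongr
        exact gain_le
    _ = _ := by ring

end FareyWeight

section DyadicParameters

open Filter

lemma dvd_qlcm (j : ℕ) : ∀ n ∈ Finset.Icc 1 (2 ^ j), n ∣ qlcm j := fun _ hn ↦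
  Finset.dvd_lcm (f := id) hn

lemma qlcm_pos (j : ℕ) : 0 < qlcm j := Nat.lcmUpto_pos (2 ^ j)

lemma log_qlcm_le (j : ℕ) :
    Real.log (qlcm j) ≤ (2 * 2 ^ j + 2 * √(2 ^ j) * j) * Real.log 2 := by
  have := Chebyshev.psi_le (x := ((2 ^ j : ℕ) : ℝ)) (by exact_mod_cast Nat.one_le_two_pow)
  rw [Chebyshev.psi_eq_log_lcmUpto] at this
  calc Real.log (qlcm j) ≤ _ := this
    _ = _ := by
      rw [show (4 : ℝ) = 2 ^ 2 by norm_num]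
      push_cast
      rw [Real.log_pow, Real.log_pow]
      push_cast
      ring

lemma add_two_sq_le_two_pow {j : ℕ} (hj : 6 ≤ j) : (j + 2) ^ 2 ≤ 2 ^ j := by
  induction j, hj using Nat.le_induction with
  | base => norm_num
  | succ n hn ih =>
    rw [pow_succ 2 n]
    nlinarith

lemma two_mul_qlcm_mul_two_pow_lt {j k : ℕ} (h : 2 ^ (j + 2) ≤ k) :
    2 * qlcm j * 2 ^ j < 2 ^ k := by
  refine lt_of_lt_of_le ?_ (Nat.pow_le_pow_right two_pos h)
  rcases lt_or_ge j 6 with hj | hj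
  · interval_cases j <;> decide +kernel
  have hq : (0 : ℝ) < qlcm j := by exact_mod_cast qlcm_pos j
  have hsq : √((2 : ℝ) ^ j) ^ 2 = 2 ^ j := Real.sq_sqrt (by positivity)
  have hj_le : (j : ℝ) + 2 ≤ √(2 ^ j) :=
    Real.le_sqrt_of_sq_le (by exact_mod_cast add_two_sq_le_two_pow hj)
  have exponent_lt : 1 + (2 * 2 ^ j + 2 * √(2 ^ j) * j) + j < (2 : ℝ) ^ (j + 2) := by
    rw [pow_add]
    nlinarith [Nat.cast_nonneg (α := ℝ) j,
      mul_nonneg (Real.sqrt_nonneg ((2 : ℝ) ^ j)) (sub_nonneg.mpr hj_le)]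
  suffices (2 * qlcm j * 2 ^ j : ℝ) < 2 ^ 2 ^ (j + 2) by exact_mod_cast this
  rw [← Real.log_lt_log_iff (by positivity) (by positivity), Real.log_mul (by positivity)
    (by positivity), Real.log_mul two_ne_zero hq.ne', Real.log_pow, Real.log_pow]
  push_cast
  calc Real.log 2 + Real.log (qlcm j) + j * Real.log 2
      ≤ (1 + (2 * 2 ^ j + 2 * √(2 ^ j) * j) + j) * Real.log 2 := by linarith [log_qlcm_le j]
    _ < _ := mul_lt_mul_of_pos_right exponent_lt (Real.log_pos one_lt_two)

lemma exists_two_rpow_neg_mul_le (c s : ℝ) (hc : 0 < c) :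
    ∃ C > 0, ∀ k : ℕ, 0 < k → (2 : ℝ) ^ (-(c * k)) ≤ C * (k : ℝ) ^ (-s) := by
  have tendsto := (tendsto_rpow_mul_exp_neg_mul_atTop_nhds_zero s (c * Real.log 2)
    (mul_pos hc (Real.log_pos one_lt_two))).comp tendsto_natCast_atTop_atTop
  obtain ⟨C, hC⟩ := tendsto.bddAbove_range
  refine ⟨max 1 C, by positivity, fun k hk ↦ ?_⟩
  have hk0 : (0 : ℝ) < k := by exact_mod_cast hk
  rw [Real.rpow_neg hk0.le, ← div_eq_mul_inv, le_div_iff₀ (by positivity), mul_comm]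
  refine le_trans (le_of_eq ?_) ((hC ⟨k, rfl⟩).trans (le_max_right 1 C))
  simp only [Function.comp_apply]
  rw [Real.rpow_def_of_pos two_pos]
  ring_nf

lemma exists_dyadic_gain_le :
    ∃ C > 0, ∀ j k : ℕ, 2 ^ (j + 2) ≤ k → k < 2 ^ (j + 3) →
      ((2 : ℝ) ^ j) ^ (-(3 / 2) : ℝ) + (2 ^ j / 2 ^ k) ^ (1 / 8 : ℝ) +
        (2 ^ j / 2) ^ (-(3 / 2) : ℝ) ≤ C * (k : ℝ) ^ (-(3 / 2) : ℝ) := by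
  obtain ⟨C, hC, h⟩ := exists_two_rpow_neg_mul_le (1 / 16) (3 / 2) (by norm_num)
  refine ⟨128 + C, by positivity, fun j k hjk hkj ↦ ?_⟩
  have hk0 : 0 < k := (by positivity : 0 < 2 ^ (j + 2)).trans_le hjk
  have hkR : (0 : ℝ) < k := by exact_mod_cast hk0
  have hk16 : (k : ℝ) / 16 ≤ 2 ^ j / 2 := by
    have : (k : ℝ) < 2 ^ (j + 3) := by exact_mod_cast hkj
    rw [pow_add] at this
    linarith
  have hjk2 : (j : ℝ) ≤ k / 2 := by
    have : 2 * j ≤ k := by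
      have : j < 2 ^ j := Nat.lt_two_pow_self
      rw [pow_add] at hjk
      lia
    rw [le_div_iff₀ two_pos]
    exact_mod_cast (mul_comm j 2).trans_le this
  have rpow_le {x : ℝ} (hx : (k : ℝ) / 16 ≤ x) :
      x ^ (-(3 / 2) : ℝ) ≤ 64 * (k : ℝ) ^ (-(3 / 2) : ℝ) := calc
    x ^ (-(3 / 2) : ℝ) ≤ (k / 16) ^ (-(3 / 2) : ℝ) :=
      Real.rpow_le_rpow_of_nonpos (by positivity) hx (by norm_num)
    _ = 64 * (k : ℝ) ^ (-(3 / 2) : ℝ) := by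
      rw [Real.div_rpow hkR.le (by norm_num), show (16 : ℝ) = 4 ^ (2 : ℝ) by norm_num,
        ← Real.rpow_mul (by norm_num)]
      norm_num
      ring
  have exp_le : ((2 : ℝ) ^ j / 2 ^ k) ^ (1 / 8 : ℝ) ≤ C * (k : ℝ) ^ (-(3 / 2) : ℝ) := calc
    ((2 : ℝ) ^ j / 2 ^ k) ^ (1 / 8 : ℝ) = 2 ^ (((j : ℝ) - k) * (1 / 8)) := by
      rw [← Real.rpow_natCast, ← Real.rpow_natCast, ← Real.rpow_sub two_pos,
        ← Real.rpow_mul zero_le_two]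
    _ ≤ 2 ^ (-(1 / 16 * k) : ℝ) := Real.rpow_le_rpow_of_exponent_le one_le_two (by linarith)
    _ ≤ _ := h k hk0
  linarith [rpow_le (hk16.trans (half_le_self (by positivity))), rpow_le hk16]

end DyadicParameters

section LatticeSums

open Filter Module

lemma summable_norm_prod_apply {ι R : Type*} [NormedCommRing R] {d : ℕ}
    {g : Fin d → ι → R} (hg : ∀ i, Summable fun n ↦ ‖g i n‖) :
    Summable fun m : Fin d → ι ↦ ‖∏ i, g i (m i)‖ := by
  induction d with
  | zero => exact .of_finite
  | succ d ih =>
    rw [← (Fin.consEquiv fun _ ↦ ι).summable_iff]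
    refine ((hg 0).mul_norm (ih fun i ↦ hg i.succ)).congr fun p ↦ ?_
    simp only [Function.comp_apply, Fin.consEquiv_apply, Fin.prod_univ_succ, Fin.cons_zero,
      Fin.cons_succ]

lemma tsum_prod_apply {ι R : Type*} [NormedCommRing R] [CompleteSpace R] {d : ℕ}
    {g : Fin d → ι → R} (hg : ∀ i, Summable fun n ↦ ‖g i n‖) :
    ∑' m : Fin d → ι, ∏ i, g i (m i) = ∏ i, ∑' n, g i n := by
  induction d with
  | zero => simp
  | succ d ih =>
    rw [← (Fin.consEquiv fun _ ↦ ι).tsum_eq, Fin.prod_univ_succ, ← ih fun i ↦ hg i.succ,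
      tsum_mul_tsum_of_summable_norm (hg 0) (summable_norm_prod_apply fun i ↦ hg i.succ)]
    refine tsum_congr fun p ↦ ?_
    simp only [Fin.consEquiv_apply, Fin.prod_univ_succ, Fin.cons_zero, Fin.cons_succ]

theorem summable_norm_schwartzMap_comp {α E F : Type*} [NormedAddCommGroup E] [NormedSpace ℝ E]
    [FiniteDimensional ℝ E] [NormedAddCommGroup F] [NormedSpace ℝ F] (ψ : SchwartzMap E F)
    (L : Submodule ℤ E) [DiscreteTopology L] {g : α → E} (hg : g.Injective)
    (mem : ∀ a, g a ∈ L) : Summable fun a ↦ ‖ψ (g a)‖ := by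
  have : ProperSpace E := FiniteDimensional.proper ℝ E
  have summable : Summable fun z : L ↦ ‖ψ z‖ := by
    refine summable_of_isBigO (ZLattice.summable_norm_rpow L (-(finrank ℤ L + 1)) (by linarith)) ?_
    exact ((ψ.isBigO_cocompact_rpow _).comp_tendsto
      (L.toAddSubgroup.tendsto_coe_cofinite_of_discrete ⟨‹_›⟩)).norm_left
  exact summable.comp_injective (hg.codRestrict mem)

lemma summable_norm_schwartzMap_intCast {ι F : Type*} [Fintype ι] [NormedAddCommGroup F]
    [NormedSpace ℝ F] (ψ : SchwartzMap (ι → ℝ) F) {s : ℝ} (hs : s ≠ 0) :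
    Summable fun m : ι → ℤ ↦ ‖ψ fun i ↦ s * m i‖ := by
  classical
  obtain ⟨b, hb⟩ : ∃ b : Basis ι ℝ (ι → ℝ), ∀ i, b i = Pi.single i s :=
    ⟨(Pi.basisFun ℝ ι).unitsSMul fun _ ↦ Units.mk0 s hs, fun i ↦ by
      rw [Basis.unitsSMul_apply, Pi.basisFun_apply, Units.smul_mk0, ← Pi.single_smul', smul_eq_mul,
        mul_one]⟩
  have mem_span (m : ι → ℤ) : (fun i ↦ s * m i) ∈ Submodule.span ℤ (Set.range b) := by
    have expansion : (fun i ↦ s * m i) = ∑ i, m i • b i := by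
      ext i
      simp [hb, Finset.sum_apply, Pi.single_apply, mul_comm]
    rw [expansion]
    exact sum_mem fun i _ ↦ Submodule.smul_mem _ _ (Submodule.subset_span ⟨i, rfl⟩)
  have injective : Function.Injective fun (m : ι → ℤ) i ↦ s * m i := fun m m' h ↦
    funext fun i ↦ Int.cast_injective (mul_left_cancel₀ hs (congrFun h i))
  exact summable_norm_schwartzMap_comp ψ _ injective mem_span

end LatticeSums

section FourierTransform

open MeasureTheory FourierTransform

variable {d : ℕ}

/-- The Schwartz function `ψ`, transported to Euclidean space and complexified, to which Mathlib's
Fourier inversion theorem applies. -/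
def euclideanComplexification (ψ : SchwartzMap (Fin d → ℝ) ℝ) :
    SchwartzMap (EuclideanSpace ℝ (Fin d)) ℂ :=
  (SchwartzMap.compCLMOfContinuousLinearEquiv ℝ (EuclideanSpace.equiv (Fin d) ℝ) ψ).postcompCLM
    Complex.ofRealCLM

lemma integral_comp_toLp {E : Type*} [NormedAddCommGroup E] [NormedSpace ℝ E]
    (g : EuclideanSpace ℝ (Fin d) → E) :
    ∫ x : Fin d → ℝ, g (WithLp.toLp 2 x) = ∫ x, g x :=
  (PiLp.volume_preserving_toLp (Fin d)).integral_comp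
    (MeasurableEquiv.toLp 2 (Fin d → ℝ)).measurableEmbedding g

lemma fourier_euclideanComplexification (ψ : SchwartzMap (Fin d → ℝ) ℝ) (ξ : Fin d → ℝ) :
    𝓕 (euclideanComplexification ψ) (WithLp.toLp 2 ξ) = ftR (fun x ↦ ψ x) ξ := by
  rw [SchwartzMap.fourier_coe, Real.fourier_eq', ftR, ← integral_comp_toLp]
  congr with x
  rw [smul_eq_mul, mul_comm]
  congr 2
  simp [PiLp.inner_apply, Finset.mul_sum, mul_comm, mul_left_comm]

lemma continuous_ftR (ψ : SchwartzMap (Fin d → ℝ) ℝ) : Continuous (ftR fun x ↦ ψ x) := by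
  simp_rw [← funext (fourier_euclideanComplexification ψ)]
  exact (𝓕 (euclideanComplexification ψ)).continuous.comp (PiLp.continuous_toLp 2 _)

lemma integral_exp_mul_ftR (ψ : SchwartzMap (Fin d → ℝ) ℝ) (x : Fin d → ℝ) :
    ∫ ξ : Fin d → ℝ, Complex.exp (2 * π * Complex.I * ∑ i, x i * ξ i) * ftR (fun x ↦ ψ x) ξ =
      ψ x := by
  have inversion : 𝓕⁻ (𝓕 (euclideanComplexification ψ)) (WithLp.toLp 2 x) = ψ x := by
    rw [fourierInv_fourier_eq]
    rfl
  rw [← inversion, SchwartzMap.fourierInv_coe, Real.fourierInv_eq', ← integral_comp_toLp]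
  congr with ξ
  rw [smul_eq_mul, fourier_euclideanComplexification]
  congr 2
  simp [PiLp.inner_apply, Finset.mul_sum, mul_comm, mul_left_comm]

lemma norm_ftR_le (ψ : (Fin d → ℝ) → ℝ) (ξ : Fin d → ℝ) : ‖ftR ψ ξ‖ ≤ ∫ x, ‖ψ x‖ := by
  refine (norm_integral_le_integral_norm _).trans_eq (integral_congr_ae (.of_forall fun x ↦ ?_))
  have : -(2 * (π : ℂ) * Complex.I) * (∑ i, x i * ξ i : ℝ) =
      (-(2 * π) * ∑ i, x i * ξ i : ℝ) * Complex.I := by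
    push_cast
    ring
  simp only [this, norm_mul, Complex.norm_real, Complex.norm_exp_ofReal_mul_I, mul_one]

end FourierTransform

section FourierMultipliers

open MeasureTheory UnitAddTorus

local instance : MeasureSpace UnitAddCircle := ⟨AddCircle.haarAddCircle⟩

local instance : Measure.IsAddHaarMeasure (volume : Measure UnitAddCircle) :=
  inferInstanceAs (Measure.IsAddHaarMeasure AddCircle.haarAddCircle)

local instance : IsProbabilityMeasure (volume : Measure UnitAddCircle) :=
  inferInstanceAs (IsProbabilityMeasure AddCircle.haarAddCircle)

section Torus

variable {ι : Type*} [Fintype ι]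

lemma norm_mFourier_apply (m : ι → ℤ) (t : UnitAddTorus ι) : ‖mFourier m t‖ = 1 := by
  simp only [mFourier, fourier_apply, ContinuousMap.coe_mk, norm_prod, Circle.norm_coe,
    Finset.prod_const_one]

lemma integrable_mFourier_mul {F : UnitAddTorus ι → ℂ} (hF : Integrable F) (m : ι → ℤ) :
    Integrable fun t ↦ mFourier m t * F t :=
  hF.bdd_mul (c := 1) (mFourier m).continuous.aestronglyMeasurable
    (.of_forall fun t ↦ (norm_mFourier_apply m t).le)

lemma norm_mFourierCoeff_le (F : UnitAddTorus ι → ℂ) (n : ι → ℤ) :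
    ‖mFourierCoeff F n‖ ≤ ∫ t, ‖F t‖ := by
  refine (norm_integral_le_integral_norm _).trans_eq ?_
  simp only [norm_smul, norm_mFourier_apply, one_mul]

lemma mFourierCoeff_congr_ae {F G : UnitAddTorus ι → ℂ} (h : F =ᵐ[volume] G) :
    mFourierCoeff F = mFourierCoeff G := by
  ext n
  refine integral_congr_ae ?_
  filter_upwards [h] with t ht
  rw [ht]

theorem exists_memLp_mFourierCoeff_eq (f : (ι → ℤ) → ℂ) (hf : Summable fun n ↦ ‖f n‖ ^ 2) :
    ∃ F : UnitAddTorus ι → ℂ, MemLp F 2 volume ∧ mFourierCoeff F = f := by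
  have memℓp : Memℓp f 2 := memℓp_gen (by simpa using hf)
  refine ⟨mFourierBasis.repr.symm ⟨f, memℓp⟩, Lp.memLp _, funext fun n ↦ ?_⟩
  rw [← mFourierBasis_repr, LinearIsometryEquiv.apply_symm_apply]

theorem tsum_enorm_mFourierCoeff_sq {F : UnitAddTorus ι → ℂ} (hF : MemLp F 2 volume) :
    ∑' n, ‖mFourierCoeff F n‖ₑ ^ 2 = ∫⁻ t, ‖F t‖ₑ ^ 2 := by
  have hasSum := hasSum_sq_mFourierCoeff (hF.toLp F)
  have integral_eq : ∫ t, ‖hF.toLp F t‖ ^ 2 = ∫ t, ‖F t‖ ^ 2 := by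
    refine integral_congr_ae ?_
    filter_upwards [hF.coeFn_toLp] with t ht
    rw [ht]
  rw [mFourierCoeff_congr_ae hF.coeFn_toLp, integral_eq] at hasSum
  simp_rw [← ofReal_norm, ← ENNReal.ofReal_pow (norm_nonneg _)]
  rw [← ofReal_integral_eq_lintegral_ofReal hF.integrable_norm_pow'
    (.of_forall fun _ ↦ by positivity), ← hasSum.tsum_eq,
    ENNReal.ofReal_tsum_of_nonneg (fun _ ↦ by positivity) hasSum.summable]

/-- The Fourier multiplier `∑ H(m) e^{2πi m·t}` of convolution with the kernel `H`. -/
def symbol (H : (ι → ℤ) → ℂ) (t : UnitAddTorus ι) : ℂ := ∑' m, H m * mFourier m t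

variable {H : (ι → ℤ) → ℂ} {F : UnitAddTorus ι → ℂ}

lemma summable_norm_mul_mFourier (hH : Summable fun m ↦ ‖H m‖) (t : UnitAddTorus ι) :
    Summable fun m ↦ ‖H m * mFourier m t‖ := by
  simpa only [norm_mul, norm_mFourier_apply, mul_one] using hH

lemma continuous_symbol (hH : Summable fun m ↦ ‖H m‖) : Continuous (symbol H) :=
  continuous_tsum (fun m ↦ continuous_const.mul (mFourier m).continuous) hH fun m t ↦ by
    rw [norm_mul, norm_mFourier_apply, mul_one]

lemma norm_symbol_le (hH : Summable fun m ↦ ‖H m‖) (t : UnitAddTorus ι) :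
    ‖symbol H t‖ ≤ ∑' m, ‖H m‖ := by
  refine (norm_tsum_le_tsum_norm (summable_norm_mul_mFourier hH t)).trans_eq ?_
  simp only [norm_mul, norm_mFourier_apply, mul_one]

lemma memLp_symbol_mul (hH : Summable fun m ↦ ‖H m‖) {p : ℝ≥0∞} (hF : MemLp F p volume) :
    MemLp (fun t ↦ symbol H t * F t) p volume := by
  refine hF.of_le_mul (c := ∑' m, ‖H m‖) ((continuous_symbol hH).aestronglyMeasurable.mul hF.1)
    (.of_forall fun t ↦ ?_)
  rw [norm_mul]
  gcongr
  exact norm_symbol_le hH t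

theorem mFourierCoeff_symbol_mul (hH : Summable fun m ↦ ‖H m‖) (hF : Integrable F)
    (n : ι → ℤ) :
    mFourierCoeff (fun t ↦ symbol H t * F t) n = ∑' m, H m * mFourierCoeff F (n - m) := by
  have term_eq (m : ι → ℤ) (t : UnitAddTorus ι) :
      mFourier (-n) t * (H m * mFourier m t * F t) = H m * (mFourier (-(n - m)) t * F t) := by
    rw [neg_sub', sub_neg_eq_add, mFourier_add]
    ring
  have tsum_integral := integral_tsum_of_summable_integral_norm (μ := volume)
    (F := fun m (t : UnitAddTorus ι) ↦ H m * (mFourier (-(n - m)) t * F t))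
    (fun m ↦ (integrable_mFourier_mul hF _).const_mul _) (by
      simp only [norm_mul, norm_mFourier_apply, one_mul, integral_const_mul]
      exact hH.mul_right _)
  simp only [integral_const_mul] at tsum_integral
  simp only [mFourierCoeff, smul_eq_mul, tsum_integral, symbol, ← tsum_mul_right, ← tsum_mul_left,
    term_eq]

theorem symbol_mFourierCoeff_ae_eq (hF : MemLp F 2 volume)
    (summable : Summable fun n ↦ ‖mFourierCoeff F n‖) :
    symbol (mFourierCoeff F) =ᵐ[volume] F := by
  obtain ⟨S, hS⟩ : Summable fun n ↦ mFourierCoeff F n • (mFourier n : C(UnitAddTorus ι, ℂ)) :=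
    .of_norm (by simpa only [norm_smul, mFourier_norm, mul_one] using summable)
  have series := hasSum_mFourier_series_L2 (hF.toLp F)
  rw [mFourierCoeff_congr_ae hF.coeFn_toLp] at series
  have toLp_eq : ContinuousMap.toLp 2 volume ℂ S = hF.toLp F :=
    HasSum.unique (by simpa only [map_smul] using (ContinuousMap.toLp 2 volume ℂ).hasSum hS) series
  have symbol_eq (t) : symbol (mFourierCoeff F) t = S t :=
    ((ContinuousMap.evalCLM ℂ t).hasSum hS).tsum_eq
  filter_upwards [hF.coeFn_toLp, ContinuousMap.coeFn_toLp (p := 2) (𝕜 := ℂ) volume S] with t h1 h2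
  rw [symbol_eq, ← h2, toLp_eq, h1]

end Torus

section Periodization

variable {ι : Type*}

/-- The representative of a point of the torus in the cube `(-1/2, 1/2]^ι`. -/
def centredRep (t : UnitAddTorus ι) (i : ι) : ℝ :=
  AddCircle.equivIoc (1 : ℝ) (-(1 / 2)) (t i)

lemma coe_centredRep (t : UnitAddTorus ι) (i : ι) : (centredRep t i : UnitAddCircle) = t i :=
  AddCircle.coe_equivIoc

lemma measurable_centredRep : Measurable (centredRep : UnitAddTorus ι → ι → ℝ) :=
  measurable_pi_lambda _ fun i ↦ measurable_subtype_coe.comp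
    ((AddCircle.measurableEquivIoc (1 : ℝ) (-(1 / 2))).measurable.comp (measurable_pi_apply i))

lemma centredRep_eq_of_coe_eq {t : UnitAddTorus ι} {i : ι} {x : ℝ}
    (hx : x ∈ Set.Ioc (-(1 / 2) : ℝ) (-(1 / 2) + 1)) (h : (x : UnitAddCircle) = t i) :
    centredRep t i = x := by
  rw [centredRep, ← h, AddCircle.equivIoc_coe_eq hx]

lemma centredRep_zsmul {q l : ℤ} {t : UnitAddTorus ι} {i : ι}
    (h : |q * centredRep t i - l| < 1 / 2) : centredRep (q • t) i = q * centredRep t i - l := by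
  refine centredRep_eq_of_coe_eq ⟨by linarith [abs_lt.mp h], by linarith [abs_lt.mp h]⟩ ?_
  have coe_l : ((l : ℝ) : UnitAddCircle) = 0 := (AddCircle.coe_eq_zero_iff 1).mpr ⟨l, by simp⟩
  rw [AddCircle.coe_sub, coe_l, sub_zero, ← zsmul_eq_mul, AddCircle.coe_zsmul, coe_centredRep,
    Pi.smul_apply]

lemma summable_norm_iff_zsmul {H : (ι → ℤ) → ℂ} {q : ℤ} (hq : q ≠ 0)
    (hH : Function.support H ⊆ Set.range (q • · : (ι → ℤ) → ι → ℤ)) :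
    (Summable fun m ↦ ‖H m‖) ↔ Summable fun m ↦ ‖H (q • m)‖ :=
  ((smul_right_injective (ι → ℤ) hq).summable_iff fun m hm ↦ by
    rw [Function.notMem_support.mp fun hc ↦ hm (hH hc), norm_zero]).symm

variable [Fintype ι]

lemma mFourier_coe (n : ι → ℤ) (x : ι → ℝ) :
    mFourier n (fun i ↦ (x i : UnitAddCircle)) =
      Complex.exp (2 * π * Complex.I * (∑ i, n i * x i : ℝ)) := by
  simp only [mFourier, ContinuousMap.coe_mk, fourier_coe_apply, Complex.ofReal_sum,
    Complex.ofReal_mul, Complex.ofReal_intCast, ← Complex.exp_sum, Finset.mul_sum,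
    Complex.ofReal_one, div_one, mul_assoc]

lemma mFourier_zsmul (q : ℤ) (m : ι → ℤ) (t : UnitAddTorus ι) :
    mFourier (q • m) t = mFourier m (q • t) := by
  simp only [mFourier, ContinuousMap.coe_mk, fourier_apply, Pi.smul_apply, smul_eq_mul, mul_smul,
    smul_comm q]

lemma symbol_eq_symbol_zsmul {H : (ι → ℤ) → ℂ} {q : ℤ} (hq : q ≠ 0)
    (hH : Function.support H ⊆ Set.range (q • · : (ι → ℤ) → ι → ℤ)) (t : UnitAddTorus ι) :
    symbol H t = symbol (fun m ↦ H (q • m)) (q • t) := by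
  rw [symbol, symbol, ← (smul_right_injective (ι → ℤ) hq).tsum_eq
    ((Function.support_mul_subset_left _ _).trans hH)]
  simp only [mFourier_zsmul]

variable {d : ℕ}

lemma mFourierCoeff_ftR_centredRep {ψ : SchwartzMap (Fin d → ℝ) ℝ}
    (h_zero : ∀ ξ ∉ cube2Q d, ftR (fun x ↦ ψ x) ξ = 0) {s : ℝ} (hs : 0 < s) (hs' : s < 1 / 2)
    (n : Fin d → ℤ) :
    mFourierCoeff (fun t : UnitAddTorus (Fin d) ↦ ftR (fun x ↦ ψ x) (-s⁻¹ • centredRep t)) n =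
      (s ^ d * ψ (fun i ↦ s * n i) : ℝ) := by
  let g (ξ : Fin d → ℝ) : ℂ :=
    Complex.exp (2 * π * Complex.I * (∑ i, s * n i * ξ i : ℝ)) * ftR (fun x ↦ ψ x) ξ
  have integrand_eq : ∀ x ∈ {x : Fin d → ℝ | ∀ i, x i ∈ Set.Ioc (-(1 / 2) : ℝ) (-(1 / 2) + 1)},
      mFourier (-n) (fun i ↦ (x i : UnitAddCircle)) •
        ftR (fun x ↦ ψ x) (-s⁻¹ • centredRep fun i ↦ (x i : UnitAddCircle)) = g (-s⁻¹ • x) := by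
    intro x hx
    have centredRep_eq : centredRep (fun i ↦ (x i : UnitAddCircle)) = x :=
      funext fun i ↦ centredRep_eq_of_coe_eq (hx i) rfl
    rw [centredRep_eq, mFourier_coe, smul_eq_mul]
    congr 4
    refine Finset.sum_congr rfl fun i _ ↦ ?_
    simp only [Pi.neg_apply, Int.cast_neg, Pi.smul_apply, smul_eq_mul]
    field_simp
  have support : ∀ x ∉ {x : Fin d → ℝ | ∀ i, x i ∈ Set.Ioc (-(1 / 2) : ℝ) (-(1 / 2) + 1)},
      g (-s⁻¹ • x) = 0 := by
    refine fun x hx ↦ mul_eq_zero_of_right _ (h_zero _ fun hc ↦ hx fun i ↦ ?_)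
    have hi := hc i
    rw [Pi.smul_apply, smul_eq_mul, abs_mul, abs_neg, abs_inv, abs_of_pos hs,
      inv_mul_le_iff₀ hs] at hi
    constructor <;> linarith [abs_le.mp hi]
  rw [mFourierCoeff_eq_integral _ _ fun _ ↦ -(1 / 2), setIntegral_congr_fun
    (MeasurableSet.univ_pi' fun i ↦ measurableSet_Ioc) integrand_eq,
    setIntegral_eq_integral_of_forall_compl_eq_zero support, Measure.integral_comp_smul,
    integral_exp_mul_ftR, Module.finrank_fin_fun, ← inv_pow, inv_neg, inv_inv, abs_pow, abs_neg,
    abs_of_pos hs, Complex.real_smul, Complex.ofReal_mul]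

theorem symbol_dilate_ae_eq {ψ : SchwartzMap (Fin d → ℝ) ℝ}
    (h_zero : ∀ ξ ∉ cube2Q d, ftR (fun x ↦ ψ x) ξ = 0) {s : ℝ} (hs : 0 < s) (hs' : s < 1 / 2) :
    (symbol fun m : Fin d → ℤ ↦ (s ^ d * ψ (fun i ↦ s * m i) : ℝ)) =ᵐ[volume]
      fun t ↦ ftR (fun x ↦ ψ x) (-s⁻¹ • centredRep t) := by
  simp_rw [← mFourierCoeff_ftR_centredRep h_zero hs hs']
  refine symbol_mFourierCoeff_ae_eq ?_ ?_
  · refine .of_bound ((continuous_ftR ψ).measurable.comp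
      (measurable_centredRep.const_smul (-s⁻¹))).aestronglyMeasurable _
      (.of_forall fun t ↦ norm_ftR_le _ _)
  · simp_rw [mFourierCoeff_ftR_centredRep h_zero hs hs', Complex.norm_real, norm_mul]
    exact (summable_norm_schwartzMap_intCast ψ hs.ne').mul_left _

lemma support_psiQL_subset (ψ : (Fin d → ℝ) → ℝ) (q : ℕ) (L : ℝ) :
    Function.support (psiQL ψ q L) ⊆ Set.range ((q : ℤ) • · : (Fin d → ℤ) → Fin d → ℤ) :=
  fun m hm ↦ by
    choose v hv using Set.mem_of_indicator_ne_zero hm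
    exact ⟨v, funext fun i ↦ (hv i).symm⟩

lemma psiQL_zsmul (ψ : (Fin d → ℝ) → ℝ) (q : ℕ) (L : ℝ) (m : Fin d → ℤ) :
    psiQL ψ q L ((q : ℤ) • m) = (q / L) ^ d * ψ (fun i ↦ q / L * m i) := by
  rw [psiQL, Set.indicator_of_mem fun i ↦ ⟨m i, rfl⟩]
  congr with i
  simp only [Pi.smul_apply, smul_eq_mul, Int.cast_mul, Int.cast_natCast]
  ring

lemma support_ofReal_psiQL_subset (ψ : (Fin d → ℝ) → ℝ) (q : ℕ) (L : ℝ) :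
    (Function.support fun m ↦ (psiQL ψ q L m : ℂ)) ⊆
      Set.range ((q : ℤ) • · : (Fin d → ℤ) → Fin d → ℤ) :=
  fun _ hm ↦ support_psiQL_subset ψ q L (Complex.ofReal_ne_zero.mp hm)

variable {ψ : SchwartzMap (Fin d → ℝ) ℝ} {q : ℕ} {L : ℝ}

lemma summable_norm_psiQL (ψ : SchwartzMap (Fin d → ℝ) ℝ) (hq : q ≠ 0) (hL : L ≠ 0) :
    Summable fun m ↦ ‖(psiQL (fun x ↦ ψ x) q L m : ℂ)‖ := by
  rw [summable_norm_iff_zsmul (Int.natCast_ne_zero.mpr hq) (support_ofReal_psiQL_subset _ q L)]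
  simp_rw [psiQL_zsmul, Complex.norm_real, norm_mul]
  exact (summable_norm_schwartzMap_intCast ψ (by positivity)).mul_left _

theorem symbol_psiQL_ae_eq (h_zero : ∀ ξ ∉ cube2Q d, ftR (fun x ↦ ψ x) ξ = 0) (hq : q ≠ 0)
    (hqL : 2 * q < L) :
    (symbol fun m ↦ (psiQL (fun x ↦ ψ x) q L m : ℂ)) =ᵐ[volume]
      fun t ↦ ftR (fun x ↦ ψ x) (-(q / L : ℝ)⁻¹ • centredRep ((q : ℤ) • t)) := by
  have hq' : (0 : ℝ) < q := by positivity
  have hL : 0 < L := by linarith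
  have measurePreserving : MeasurePreserving (fun t : UnitAddTorus (Fin d) ↦ (q : ℤ) • t) :=
    Measure.measurePreserving_zsmul volume (Int.natCast_ne_zero.mpr hq)
  have dilate := measurePreserving.quasiMeasurePreserving.ae
    (symbol_dilate_ae_eq h_zero (div_pos hq' hL) ((div_lt_iff₀ hL).mpr (by linarith)))
  filter_upwards [dilate] with t ht
  rw [symbol_eq_symbol_zsmul (Int.natCast_ne_zero.mpr hq) (support_ofReal_psiQL_subset _ q L)]
  simpa only [psiQL_zsmul] using ht

lemma norm_one_sub_symbol_psiQL_le (h_zero : ∀ ξ ∉ cube2Q d, ftR (fun x ↦ ψ x) ξ = 0)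
    (hq : q ≠ 0) (hqL : 2 * q < L) :
    ∀ᵐ t, ‖1 - symbol (fun m ↦ (psiQL (fun x ↦ ψ x) q L m : ℂ)) t‖ ≤ 1 + ∫ x, ‖ψ x‖ := by
  filter_upwards [symbol_psiQL_ae_eq h_zero hq hqL] with t ht
  rw [ht]
  exact (norm_sub_le _ _).trans (by rw [norm_one]; gcongr; exact norm_ftR_le _ _)

theorem symbol_psiQL_eq_one_of_nearRat (h_one : ∀ ξ ∈ cubeQ d, ftR (fun x ↦ ψ x) ξ = 1)
    (h_zero : ∀ ξ ∉ cube2Q d, ftR (fun x ↦ ψ x) ξ = 0) (hq : q ≠ 0) (hqL : 2 * q < L) :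
    ∀ᵐ t, (∀ i, NearRat (centredRep t i) (1 / (2 * L)) q) →
      symbol (fun m ↦ (psiQL (fun x ↦ ψ x) q L m : ℂ)) t = 1 := by
  filter_upwards [symbol_psiQL_ae_eq h_zero hq hqL] with t ht near
  have hq' : (0 : ℝ) < q := by positivity
  have hL : 0 < L := by linarith
  rw [ht]
  refine h_one _ fun i ↦ ?_
  obtain ⟨l, hl⟩ := near i
  have dist_int : |(q : ℤ) * centredRep t i - l| ≤ q / (2 * L) :=
    calc |(q : ℤ) * centredRep t i - l| = q * |centredRep t i - l / q| := by
          rw [← abs_of_pos hq', ← abs_mul, abs_of_pos hq', mul_sub, mul_div_cancel₀ _ hq'.ne',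
            Int.cast_natCast]
      _ ≤ q * (1 / (2 * L)) := by gcongr
      _ = q / (2 * L) := mul_one_div _ _
  have lt_half : (q : ℝ) / (2 * L) < 1 / 2 := by
    rw [div_lt_div_iff₀ (by positivity) two_pos]
    linarith
  rw [Pi.smul_apply, centredRep_zsmul (dist_int.trans_lt lt_half), smul_eq_mul, abs_mul, abs_neg,
    abs_inv, abs_of_pos (div_pos hq' hL), inv_mul_le_iff₀ (div_pos hq' hL)]
  exact dist_int.trans_eq (by field_simp)

end Periodization

section CircleMethod

open Complex

variable {d : ℕ} {Λ : ℝ}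

/-- The kernel `e^{-π|m|²/Λ²} e^{2πiα|m|²}`, whose integral against `e^{-2πiαN}` over `α ∈ [0, 1]`
is, up to a constant, the indicator of the lattice sphere `|m|² = N`. -/
def gaussKernel (Λ α : ℝ) (m : Fin d → ℤ) : ℂ :=
  cexp (π * I * (∑ i, m i ^ 2 : ℤ) * thetaParam Λ α)

lemma gaussKernel_eq_prod (Λ α : ℝ) (m : Fin d → ℤ) :
    gaussKernel Λ α m = ∏ i, jacobiTheta₂_term (m i) 0 (thetaParam Λ α) := by
  simp only [gaussKernel, jacobiTheta₂_term, ← Complex.exp_sum, Int.cast_sum, Int.cast_pow,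
    mul_zero, zero_add, Finset.mul_sum, Finset.sum_mul]

lemma norm_gaussKernel (Λ α : ℝ) (m : Fin d → ℤ) : ‖gaussKernel Λ α m‖ = ‖gaussKernel Λ 0 m‖ := by
  simp only [gaussKernel_eq_prod, norm_prod, ← ofReal_zero, norm_jacobiTheta₂_term_ofReal,
    thetaParam_im]

lemma summable_norm_gaussKernel (hΛ : 0 < Λ) (α : ℝ) :
    Summable fun m : Fin d → ℤ ↦ ‖gaussKernel Λ α m‖ := by
  simp only [gaussKernel_eq_prod]
  refine summable_norm_prod_apply (g := fun _ n ↦ jacobiTheta₂_term n 0 (thetaParam Λ α))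
    fun _ ↦ ((summable_jacobiTheta₂_term_iff _ _).mpr ?_).norm
  rw [thetaParam_im]
  positivity

lemma continuous_gaussKernel (Λ : ℝ) (m : Fin d → ℤ) : Continuous fun α ↦ gaussKernel Λ α m := by
  simp only [gaussKernel, thetaParam]
  fun_prop

theorem symbol_gaussKernel (hΛ : 0 < Λ) (α : ℝ) (t : UnitAddTorus (Fin d)) :
    symbol (gaussKernel Λ α) t = ∏ i, jacobiTheta₂ (centredRep t i) (thetaParam Λ α) := by
  have term_eq (n : ℤ) (i : Fin d) : jacobiTheta₂_term n 0 (thetaParam Λ α) * fourier n (t i) =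
      jacobiTheta₂_term n (centredRep t i) (thetaParam Λ α) := by
    rw [← coe_centredRep t i, fourier_coe_apply, jacobiTheta₂_term, jacobiTheta₂_term,
      ← Complex.exp_add]
    congr 1
    push_cast
    ring
  simp only [symbol, gaussKernel_eq_prod, mFourier, ContinuousMap.coe_mk,
    ← Finset.prod_mul_distrib, term_eq]
  refine tsum_prod_apply (g := fun i n ↦ jacobiTheta₂_term n (centredRep t i) (thetaParam Λ α))
    fun i ↦ ((summable_jacobiTheta₂_term_iff _ _).mpr ?_).norm
  rw [thetaParam_im]
  positivity

lemma continuous_symbol_gaussKernel (hΛ : 0 < Λ) :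
    Continuous fun p : ℝ × UnitAddTorus (Fin d) ↦ symbol (gaussKernel Λ p.1) p.2 := by
  refine continuous_tsum (fun m ↦ ?_) (summable_norm_gaussKernel hΛ 0) fun m p ↦ ?_
  · exact ((continuous_gaussKernel Λ m).comp continuous_fst).mul
      ((mFourier m).continuous.comp continuous_snd)
  · rw [norm_mul, norm_mFourier_apply, mul_one, norm_gaussKernel]

/-- The convolution of `g` with `gaussKernel Λ α`. -/
def gaussConv (Λ α : ℝ) (g : (Fin d → ℤ) → ℂ) (n : Fin d → ℤ) : ℂ :=
  ∑' m, gaussKernel Λ α m * g (n - m)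

variable {g : (Fin d → ℤ) → ℂ} {B : ℝ}

lemma summable_norm_gaussKernel_mul (hΛ : 0 < Λ) (hg : ∀ n, ‖g n‖ ≤ B) (α : ℝ) (n : Fin d → ℤ) :
    Summable fun m ↦ ‖gaussKernel Λ α m‖ * ‖g (n - m)‖ :=
  .of_nonneg_of_le (fun m ↦ by positivity) (fun m ↦ by gcongr; exact hg _)
    ((summable_norm_gaussKernel hΛ α).mul_right B)

lemma continuous_gaussConv (hΛ : 0 < Λ) (hg : ∀ n, ‖g n‖ ≤ B) (n : Fin d → ℤ) :
    Continuous fun α ↦ gaussConv Λ α g n := by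
  refine continuous_tsum (fun m ↦ (continuous_gaussKernel Λ m).mul continuous_const)
    (summable_norm_gaussKernel_mul hΛ hg 0 n) fun m α ↦ ?_
  rw [norm_mul, norm_gaussKernel]

lemma gaussConv_mFourierCoeff {F : UnitAddTorus (Fin d) → ℂ} (hΛ : 0 < Λ) (hF : Integrable F)
    (α : ℝ) :
    gaussConv Λ α (mFourierCoeff F) = mFourierCoeff fun t ↦ symbol (gaussKernel Λ α) t * F t :=
  funext fun n ↦ (mFourierCoeff_symbol_mul (summable_norm_gaussKernel hΛ α) hF n).symm

lemma integral_Ioc_cexp_two_pi_mul_int (k : ℤ) :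
    ∫ α in Set.Ioc (0 : ℝ) 1, cexp (2 * π * I * k * α) = if k = 0 then 1 else 0 := by
  rw [← intervalIntegral.integral_of_le zero_le_one]
  split_ifs with hk
  · simp [hk]
  · rw [integral_exp_mul_complex (by simp [hk, Real.pi_ne_zero]), ofReal_one, mul_one,
      mul_comm _ (k : ℂ), exp_int_mul_two_pi_mul_I]
    simp

lemma norm_cexp_neg_two_pi_mul (α : ℝ) (N : ℕ) : ‖cexp (-(2 * π * I * α * N))‖ = 1 := by
  simp [norm_exp]

lemma integral_gaussKernel_mul_cexp (Λ : ℝ) (m : Fin d → ℤ) (N : ℕ) :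
    ∫ α in Set.Ioc (0 : ℝ) 1, gaussKernel Λ α m * cexp (-(2 * π * I * α * N)) =
      if m ∈ latticeSphere d N then (rexp (-(π * N / Λ ^ 2)) : ℂ) else 0 := by
  have integrand_eq (α : ℝ) : gaussKernel Λ α m * cexp (-(2 * π * I * α * N)) =
      cexp (-(π * (∑ i, m i ^ 2 : ℤ) / Λ ^ 2)) *
        cexp (2 * π * I * (∑ i, m i ^ 2 - N : ℤ) * α) := by
    rw [gaussKernel, thetaParam, ← Complex.exp_add, ← Complex.exp_add]
    congr 1
    push_cast
    linear_combination (π * (∑ i, (m i : ℂ) ^ 2) / Λ ^ 2) * I_sq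
  simp only [integrand_eq, integral_const_mul, integral_Ioc_cexp_two_pi_mul_int, sub_eq_zero,
    mem_latticeSphere, mul_ite, mul_one, mul_zero]
  refine if_ctx_congr Iff.rfl (fun h ↦ ?_) fun _ ↦ rfl
  rw [h]
  push_cast
  rfl

theorem integral_gaussConv_mul_cexp (hΛ : 0 < Λ) (hg : ∀ n, ‖g n‖ ≤ B)
    (n : Fin d → ℤ) (N : ℕ) :
    ∫ α in Set.Ioc (0 : ℝ) 1, gaussConv Λ α g n * cexp (-(2 * π * I * α * N)) =
      rexp (-(π * N / Λ ^ 2)) * ∑ m ∈ latticeSphere d N, g (n - m) := by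
  let term (m : Fin d → ℤ) (α : ℝ) : ℂ :=
    gaussKernel Λ α m * cexp (-(2 * π * I * α * N)) * g (n - m)
  have integrable_term (m) : IntegrableOn (term m) (Set.Ioc 0 1) := by
    have := continuous_gaussKernel Λ m
    exact (Continuous.integrableOn_Icc (by fun_prop)).mono_set Set.Ioc_subset_Icc_self
  have norm_term (m α) : ‖term m α‖ = ‖gaussKernel Λ 0 m‖ * ‖g (n - m)‖ := by
    rw [norm_mul, norm_mul, norm_cexp_neg_two_pi_mul, mul_one, norm_gaussKernel]
  have integral_term (m) : ∫ α in Set.Ioc (0 : ℝ) 1, term m α =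
      if m ∈ latticeSphere d N then rexp (-(π * N / Λ ^ 2)) * g (n - m) else 0 := by
    rw [integral_mul_const, integral_gaussKernel_mul_cexp, ite_mul, zero_mul]
  have tsum_term (α) : gaussConv Λ α g n * cexp (-(2 * π * I * α * N)) = ∑' m, term m α := by
    rw [gaussConv, ← tsum_mul_right]
    exact tsum_congr fun m ↦ mul_right_comm _ _ _
  have summable_norm : Summable fun m ↦ ∫ α in Set.Ioc (0 : ℝ) 1, ‖term m α‖ := by
    simpa [norm_term] using summable_norm_gaussKernel_mul hΛ hg 0 n
  simp_rw [tsum_term]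
  rw [← integral_tsum_of_summable_integral_norm integrable_term summable_norm]
  simp_rw [integral_term]
  rw [tsum_eq_sum (s := latticeSphere d N) fun m hm ↦ if_neg hm, Finset.mul_sum]
  exact Finset.sum_congr rfl fun m hm ↦ if_pos hm

end CircleMethod

section MaximalFunction

theorem sq_lintegral_le_mul_lintegral {X : Type*} [MeasurableSpace X] {μ : Measure X}
    {v h : X → ℝ≥0∞} (hv : AEMeasurable v μ) (hh : AEMeasurable h μ)
    (hv_zero : ∀ᵐ a ∂μ, v a ≠ 0) (hv_top : ∀ᵐ a ∂μ, v a ≠ ⊤) :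
    (∫⁻ a, h a ∂μ) ^ 2 ≤ (∫⁻ a, (v a)⁻¹ ∂μ) * ∫⁻ a, v a * h a ^ 2 ∂μ := by
  have holder := ENNReal.lintegral_mul_le_Lp_mul_Lq μ Real.HolderConjugate.two_two
    (f := fun a ↦ (v a)⁻¹ ^ (1 / 2 : ℝ)) (g := fun a ↦ v a ^ (1 / 2 : ℝ) * h a)
    (by fun_prop) (by fun_prop)
  have product_eq :
      ∫⁻ a, (v a)⁻¹ ^ (1 / 2 : ℝ) * (v a ^ (1 / 2 : ℝ) * h a) ∂μ = ∫⁻ a, h a ∂μ := by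
    refine lintegral_congr_ae ?_
    filter_upwards [hv_zero, hv_top] with a h0 hT
    rw [← mul_assoc, ← ENNReal.mul_rpow_of_nonneg _ _ (by norm_num), ENNReal.inv_mul_cancel h0 hT,
      ENNReal.one_rpow, one_mul]
  have sq_sqrt (x : ℝ≥0∞) : (x ^ (1 / 2 : ℝ)) ^ (2 : ℝ) = x := by
    rw [← ENNReal.rpow_mul, div_mul_cancel₀ _ two_ne_zero, ENNReal.rpow_one]
  simp only [Pi.mul_apply, product_eq, sq_sqrt, ENNReal.mul_rpow_of_nonneg _ _ zero_le_two]
    at holder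
  calc (∫⁻ a, h a ∂μ) ^ 2
      ≤ ((∫⁻ a, (v a)⁻¹ ∂μ) ^ (1 / 2 : ℝ) *
          (∫⁻ a, v a * h a ^ (2 : ℝ) ∂μ) ^ (1 / 2 : ℝ)) ^ 2 := by gcongr
    _ = (∫⁻ a, (v a)⁻¹ ∂μ) * ∫⁻ a, v a * h a ^ 2 ∂μ := by
        simp only [← ENNReal.rpow_two, ENNReal.mul_rpow_of_nonneg _ _ zero_le_two, sq_sqrt]

variable {d : ℕ} {Λ lam B : ℝ} {N : ℕ} {g : (Fin d → ℤ) → ℝ}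

lemma Avg_eq_sum_latticeSphere (hN : (N : ℝ) = lam ^ 2) (g : (Fin d → ℤ) → ℝ) (n : Fin d → ℤ) :
    Avg lam g n = (Nlam d lam : ℝ)⁻¹ * ∑ m ∈ latticeSphere d N, g (n - m) := by
  rw [Avg, sph_eq_latticeSphere hN]
  exact congrArg _ (Finset.tsum_subtype _ fun m ↦ g (n - m))

lemma enorm_sum_latticeSphere_le {g : (Fin d → ℤ) → ℂ} (hΛ : 0 < Λ) (hg : ∀ n, ‖g n‖ ≤ B)
    (n : Fin d → ℤ) (N : ℕ) :
    ‖∑ m ∈ latticeSphere d N, g (n - m)‖ₑ ≤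
      .ofReal (rexp (π * N / Λ ^ 2)) * ∫⁻ α in Set.Ioc (0 : ℝ) 1, ‖gaussConv Λ α g n‖ₑ := by
  have sum_eq : ∑ m ∈ latticeSphere d N, g (n - m) = rexp (π * N / Λ ^ 2) *
      ∫ α in Set.Ioc (0 : ℝ) 1, gaussConv Λ α g n *
        Complex.exp (-(2 * π * Complex.I * α * N)) := by
    rw [integral_gaussConv_mul_cexp hΛ hg, ← mul_assoc, ← Complex.ofReal_mul, ← Real.exp_add,
      add_neg_cancel, Real.exp_zero, Complex.ofReal_one, one_mul]
  rw [sum_eq, enorm_mul, ← ofReal_norm (_ : ℂ), Complex.norm_real, Real.norm_eq_abs,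
    Real.abs_exp]
  gcongr
  refine (enorm_integral_le_lintegral_enorm _).trans_eq (lintegral_congr fun α ↦ ?_)
  rw [enorm_mul, ← ofReal_norm (Complex.exp _), norm_cexp_neg_two_pi_mul, ENNReal.ofReal_one,
    mul_one]

lemma enorm_Avg_le (hΛ : 0 < Λ) (hN : (N : ℝ) = lam ^ 2) (hlam : lam ^ 2 ≤ 4 * Λ ^ 2)
    (hg : ∀ n, ‖g n‖ ≤ B) (n : Fin d → ℤ) :
    ‖Avg lam g n‖ₑ ≤ .ofReal ((Nlam d lam : ℝ)⁻¹ * rexp (4 * π)) *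
      ∫⁻ α in Set.Ioc (0 : ℝ) 1, ‖gaussConv Λ α (fun n ↦ (g n : ℂ)) n‖ₑ := by
  have exponent_le : π * N / Λ ^ 2 ≤ 4 * π := by
    rw [div_le_iff₀ (by positivity), hN]
    nlinarith [Real.pi_pos]
  have sum_le := enorm_sum_latticeSphere_le (g := fun n ↦ (g n : ℂ)) hΛ (by simpa using hg) n N
  rw [← Complex.ofReal_sum, ← ofReal_norm, Complex.norm_real, ofReal_norm] at sum_le
  rw [Avg_eq_sum_latticeSphere hN, enorm_mul, ENNReal.ofReal_mul (by positivity), mul_assoc,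
    ← ofReal_norm (_⁻¹), norm_inv, RCLike.norm_natCast]
  gcongr
  exact sum_le.trans (by gcongr)

lemma exists_Mk_le (hd : 5 ≤ d) :
    ∃ C > 0, ∀ (k : ℕ) {g : (Fin d → ℤ) → ℝ} {B : ℝ}, (∀ n, ‖g n‖ ≤ B) → ∀ n,
      Mk k g n ≤ .ofReal (C / (2 ^ k) ^ (d - 2)) *
        ∫⁻ α in Set.Icc (0 : ℝ) 1, ‖gaussConv (2 ^ k) α (fun n ↦ (g n : ℂ)) n‖ₑ := by
  obtain ⟨c, hc, le_Nlam⟩ := exists_le_Nlam hd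
  refine ⟨c⁻¹ * rexp (4 * π), by positivity, fun k g B hg n ↦ iSup₂_le ?_⟩
  rintro lam ⟨two_pow_le, le_two_pow, N, hN⟩
  have one_le_two_pow : (1 : ℝ) ≤ 2 ^ k := one_le_pow₀ one_le_two
  refine (enorm_Avg_le (Λ := 2 ^ k) (by positivity) hN ?_ hg n).trans ?_
  · rw [pow_succ] at le_two_pow
    nlinarith
  · rw [mul_div_right_comm, inv_eq_one_div c, div_div, one_div]
    gcongr
    · calc c * (2 ^ k) ^ (d - 2) ≤ c * lam ^ (d - 2) := by gcongr
        _ ≤ Nlam d lam := le_Nlam lam N (one_le_two_pow.trans two_pow_le) hN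
    · exact Set.Ioc_subset_Icc_self

theorem exists_sq_Mk_le (hd : 5 ≤ d) :
    ∃ C > 0, ∀ (k : ℕ) {g : (Fin d → ℤ) → ℝ} {B : ℝ}, (∀ n, ‖g n‖ ≤ B) → ∀ n,
      Mk k g n ^ 2 ≤ .ofReal (C * ((2 ^ k) ^ 2 / (2 ^ k) ^ (2 * d))) *
        ∫⁻ α in Set.Icc (0 : ℝ) 1, fareyWeight (2 ^ k) α *
          ‖gaussConv (2 ^ k) α (fun n ↦ (g n : ℂ)) n‖ₑ ^ 2 := by
  obtain ⟨C₁, hC₁, Mk_le⟩ := exists_Mk_le hd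
  obtain ⟨C₂, hC₂, weight_le⟩ := exists_lintegral_inv_fareyWeight_le
  refine ⟨C₁ ^ 2 * C₂, by positivity, fun k g B hg n ↦ ?_⟩
  have one_le_two_pow : (1 : ℝ) ≤ 2 ^ k := one_le_pow₀ one_le_two
  have cauchySchwarz := sq_lintegral_le_mul_lintegral (μ := volume.restrict (Set.Icc (0 : ℝ) 1))
    (measurable_fareyWeight (2 ^ k)).aemeasurable
    (continuous_gaussConv (Λ := 2 ^ k) (by positivity) (by simpa using hg) n
      (g := fun n ↦ (g n : ℂ))).enorm.aemeasurable
    ((ae_restrict_iff' measurableSet_Icc).mpr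
      (.of_forall fun α ↦ fareyWeight_ne_zero one_le_two_pow))
    (.of_forall (fareyWeight_ne_top _))
  have constant_eq : (C₁ / (2 ^ k) ^ (d - 2)) ^ 2 * (C₂ / (2 ^ k) ^ 2) =
      C₁ ^ 2 * C₂ * ((2 ^ k) ^ 2 / (2 ^ k) ^ (2 * d)) := by
    obtain ⟨e, rfl⟩ := Nat.exists_eq_add_of_le' (show 2 ≤ d by lia)
    rw [Nat.add_sub_cancel]
    field_simp
    ring
  calc Mk k g n ^ 2
      ≤ (.ofReal (C₁ / (2 ^ k) ^ (d - 2)) *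
          ∫⁻ α in Set.Icc (0 : ℝ) 1, ‖gaussConv (2 ^ k) α (fun n ↦ (g n : ℂ)) n‖ₑ) ^ 2 := by
        gcongr
        exact Mk_le k hg n
    _ ≤ .ofReal (C₁ / (2 ^ k) ^ (d - 2)) ^ 2 * (.ofReal (C₂ / (2 ^ k) ^ 2) *
          ∫⁻ α in Set.Icc (0 : ℝ) 1, fareyWeight (2 ^ k) α *
            ‖gaussConv (2 ^ k) α (fun n ↦ (g n : ℂ)) n‖ₑ ^ 2) := by
        rw [mul_pow]
        gcongr
        refine cauchySchwarz.trans ?_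
        gcongr
        exact weight_le _ one_le_two_pow
    _ = _ := by
        rw [← mul_assoc, ← ENNReal.ofReal_pow (by positivity), ← ENNReal.ofReal_mul (by positivity),
          constant_eq]

end MaximalFunction

section ErrorMultiplier

lemma lintegral_mul_lintegral_swap {X Y : Type*} [MeasurableSpace X] [MeasurableSpace Y]
    {μ : Measure X} {ν : Measure Y} [SFinite μ] [SFinite ν] {w : X → ℝ≥0∞} {K : X → Y → ℝ≥0∞}
    {b : Y → ℝ≥0∞} (hw : Measurable w) (hw_top : ∀ x, w x ≠ ⊤)
    (hK : Measurable (Function.uncurry K)) (hb : AEMeasurable b ν) :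
    ∫⁻ x, w x * ∫⁻ y, K x y * b y ∂ν ∂μ = ∫⁻ y, (∫⁻ x, w x * K x y ∂μ) * b y ∂ν := by
  have swap := lintegral_lintegral_swap (μ := μ) (ν := ν) (f := fun x y ↦ w x * K x y * b y)
    (((hw.comp measurable_fst).mul hK).aemeasurable.mul hb.comp_snd)
  simp_rw [mul_assoc (w _), lintegral_const_mul' _ _ (hw_top _)] at swap
  rw [swap]
  refine lintegral_congr fun y ↦ ?_
  simp_rw [← mul_assoc]
  exact lintegral_mul_const _ (hw.mul (hK.comp measurable_prodMk_right))

variable {d : ℕ}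

/-- The Farey-weighted mean square over `α` of the multipliers of the kernels `gaussKernel Λ α`. -/
def gaussEnergy (Λ : ℝ) (t : UnitAddTorus (Fin d)) : ℝ≥0∞ :=
  ∫⁻ α in Set.Icc (0 : ℝ) 1, fareyWeight Λ α * ‖symbol (gaussKernel Λ α) t‖ₑ ^ 2

theorem tsum_lintegral_gaussConv_eq {Λ B : ℝ} {G : UnitAddTorus (Fin d) → ℂ} (hΛ : 0 < Λ)
    (hG : MemLp G 2 volume) (hG_bdd : ∀ n, ‖mFourierCoeff G n‖ ≤ B) :
    ∑' n, ∫⁻ α in Set.Icc (0 : ℝ) 1,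
        fareyWeight Λ α * ‖gaussConv Λ α (mFourierCoeff G) n‖ₑ ^ 2 =
      ∫⁻ t, gaussEnergy Λ t * ‖G t‖ₑ ^ 2 := by
  have parseval (α : ℝ) : ∑' n, ‖gaussConv Λ α (mFourierCoeff G) n‖ₑ ^ 2 =
      ∫⁻ t, ‖symbol (gaussKernel Λ α) t‖ₑ ^ 2 * ‖G t‖ₑ ^ 2 := by
    rw [gaussConv_mFourierCoeff hΛ (hG.integrable one_le_two), tsum_enorm_mFourierCoeff_sq
      (memLp_symbol_mul (summable_norm_gaussKernel hΛ α) hG)]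
    simp only [enorm_mul, mul_pow]
  rw [← lintegral_tsum (f := fun n α ↦ fareyWeight Λ α * ‖gaussConv Λ α (mFourierCoeff G) n‖ₑ ^ 2)
    fun n ↦ ((measurable_fareyWeight Λ).mul
      ((continuous_gaussConv hΛ hG_bdd n).enorm.measurable.pow_const 2)).aemeasurable]
  simp_rw [ENNReal.tsum_mul_left, parseval]
  exact lintegral_mul_lintegral_swap (measurable_fareyWeight Λ) (fareyWeight_ne_top Λ)
    ((continuous_symbol_gaussKernel hΛ).enorm.measurable.pow_const 2) (hG.1.enorm.pow_const 2)

theorem exists_tsum_sq_Mk_le (hd : 5 ≤ d) :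
    ∃ C > 0, ∀ (k : ℕ) {g : (Fin d → ℤ) → ℝ} {G : UnitAddTorus (Fin d) → ℂ},
      MemLp G 2 volume → mFourierCoeff G = (fun n ↦ (g n : ℂ)) →
      ∑' n, Mk k g n ^ 2 ≤ .ofReal (C * ((2 ^ k) ^ 2 / (2 ^ k) ^ (2 * d))) *
        ∫⁻ t, gaussEnergy (2 ^ k) t * ‖G t‖ₑ ^ 2 := by
  obtain ⟨C, hC, sq_Mk_le⟩ := exists_sq_Mk_le hd
  refine ⟨C, hC, fun k g G hG hg ↦ ?_⟩
  have coeff_bdd := norm_mFourierCoeff_le G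
  have g_bdd (n) : ‖g n‖ ≤ ∫ t, ‖G t‖ := by simpa only [hg, Complex.norm_real] using coeff_bdd n
  rw [← tsum_lintegral_gaussConv_eq (by positivity) hG coeff_bdd, hg, ← ENNReal.tsum_mul_left]
  exact ENNReal.tsum_le_tsum (sq_Mk_le k g_bdd)

lemma exists_gaussEnergy_le (hd : 5 ≤ d) :
    ∃ C > 0, ∀ j k : ℕ, 2 ^ (j + 2) ≤ k → k < 2 ^ (j + 3) → ∀ t : UnitAddTorus (Fin d),
      (¬∀ i, NearRat (centredRep t i) (1 / (2 * 2 ^ ((k : ℤ) - j))) (qlcm j)) →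
      gaussEnergy (2 ^ k) t ≤
        .ofReal (C * ((2 ^ k) ^ (2 * d) / (2 ^ k) ^ 2) * (k : ℝ) ^ (-(3 / 2) : ℝ)) := by
  obtain ⟨C₁, hC₁, weight_mul_prod_le⟩ := exists_lintegral_fareyWeight_mul_prod_le hd
  obtain ⟨C₂, hC₂, gain_le⟩ := exists_dyadic_gain_le
  refine ⟨C₁ * C₂, by positivity, fun j k hjk hkj t far ↦ ?_⟩
  obtain ⟨i, hi⟩ := not_forall.mp far
  have ρ_eq : 1 / (2 * (2 : ℝ) ^ ((k : ℤ) - j)) = 2 ^ j / 2 ^ k / 2 := by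
    rw [zpow_sub₀ two_ne_zero, zpow_natCast, zpow_natCast]
    field_simp
  have prod_le := weight_mul_prod_le (2 ^ k) _ (2 ^ j) (qlcm j) (centredRep t) i
    (one_le_pow₀ one_le_two) (by positivity) (by positivity) (dvd_qlcm j) (qlcm_pos j).ne' hi
  rw [ρ_eq, mul_div_cancel₀ _ two_ne_zero, ← mul_div_assoc, mul_div_cancel₀ _ (by positivity),
    Nat.cast_pow, Nat.cast_ofNat] at prod_le
  calc gaussEnergy (2 ^ k) t
      ≤ ∫⁻ α, fareyWeight (2 ^ k) α * ‖symbol (gaussKernel (2 ^ k) α) t‖ₑ ^ 2 :=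
        setLIntegral_le_lintegral _ _
    _ ≤ _ := by
        simp_rw [symbol_gaussKernel (Λ := 2 ^ k) (by positivity), enorm_eq_nnnorm,
          nnnorm_prod, ENNReal.ofNNReal_finsetProd, ← Finset.prod_pow]
        exact prod_le
    _ ≤ _ := by
        refine ENNReal.ofReal_le_ofReal ((mul_le_mul_of_nonneg_left (gain_le j k hjk hkj)
          (by positivity)).trans_eq (by ring))

variable {ψ : SchwartzMap (Fin d → ℝ) ℝ}

lemma two_mul_qlcm_lt_zpow {j k : ℕ} (h : 2 ^ (j + 2) ≤ k) :
    2 * (qlcm j : ℝ) < 2 ^ ((k : ℤ) - j) := by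
  rw [zpow_sub₀ two_ne_zero, zpow_natCast, zpow_natCast, lt_div_iff₀ (by positivity)]
  exact_mod_cast two_mul_qlcm_mul_two_pow_lt h

theorem exists_gaussEnergy_mul_one_sub_symbol_le (hd : 5 ≤ d)
    (h_one : ∀ ξ ∈ cubeQ d, ftR (fun x ↦ ψ x) ξ = 1)
    (h_zero : ∀ ξ ∉ cube2Q d, ftR (fun x ↦ ψ x) ξ = 0) :
    ∃ C > 0, ∀ j k : ℕ, 2 ^ (j + 2) ≤ k → k < 2 ^ (j + 3) → ∀ᵐ t,
      gaussEnergy (2 ^ k) t * ‖1 - symbol (fun m ↦ (PsiJK (fun x ↦ ψ x) j k m : ℂ)) t‖ₑ ^ 2 ≤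
        .ofReal (C * ((2 ^ k) ^ (2 * d) / (2 ^ k) ^ 2) * (k : ℝ) ^ (-(3 / 2) : ℝ)) := by
  obtain ⟨C, hC, energy_le⟩ := exists_gaussEnergy_le hd
  have hB : 0 < 1 + ∫ x, ‖ψ x‖ := add_pos_of_pos_of_nonneg one_pos (by positivity)
  refine ⟨C * (1 + ∫ x, ‖ψ x‖) ^ 2, by positivity, fun j k hjk hkj ↦ ?_⟩
  have hq := (qlcm_pos j).ne'
  have hqL := two_mul_qlcm_lt_zpow hjk
  filter_upwards [norm_one_sub_symbol_psiQL_le h_zero hq hqL,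
    symbol_psiQL_eq_one_of_nearRat h_one h_zero hq hqL] with t norm_le eq_one
  by_cases near : ∀ i, NearRat (centredRep t i) (1 / (2 * 2 ^ ((k : ℤ) - j))) (qlcm j)
  · simp [PsiJK, eq_one near]
  · calc _ ≤ .ofReal (C * ((2 ^ k) ^ (2 * d) / (2 ^ k) ^ 2) * (k : ℝ) ^ (-(3 / 2) : ℝ)) *
            ENNReal.ofReal (1 + ∫ x, ‖ψ x‖) ^ 2 := by
          gcongr
          · exact energy_le j k hjk hkj t near
          · rw [← ofReal_norm]
            exact ENNReal.ofReal_le_ofReal norm_le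
      _ = _ := by
          rw [← ENNReal.ofReal_pow hB.le, ← ENNReal.ofReal_mul (by positivity)]
          ring_nf

lemma mFourierCoeff_one_sub_symbol_mul {h : (Fin d → ℤ) → ℝ} {F : UnitAddTorus (Fin d) → ℂ}
    {f : (Fin d → ℤ) → ℝ} (hh : Summable fun m ↦ ‖(h m : ℂ)‖) (hF : MemLp F 2 volume)
    (hf : mFourierCoeff F = fun n ↦ (f n : ℂ)) :
    mFourierCoeff (fun t ↦ (1 - symbol (fun m ↦ (h m : ℂ)) t) * F t) =
      fun n ↦ ((f n - conv f h n : ℝ) : ℂ) := by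
  funext n
  have coeff_conv := mFourierCoeff_symbol_mul hh (hF.integrable one_le_two) n
  simp only [hf, mul_comm (h _ : ℂ)] at coeff_conv
  have coeff_f := congrFun hf n
  rw [mFourierCoeff] at coeff_conv coeff_f ⊢
  simp only [sub_mul, one_mul, smul_eq_mul, mul_sub] at coeff_conv coeff_f ⊢
  rw [integral_sub (integrable_mFourier_mul (hF.integrable one_le_two) _)
    (integrable_mFourier_mul ((memLp_symbol_mul hh hF).integrable one_le_two) _), coeff_f,
    coeff_conv, conv]
  push_cast
  rfl

theorem exists_tsum_sq_Mk_sub_conv_le (hd : 5 ≤ d)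
    (h_one : ∀ ξ ∈ cubeQ d, ftR (fun x ↦ ψ x) ξ = 1)
    (h_zero : ∀ ξ ∉ cube2Q d, ftR (fun x ↦ ψ x) ξ = 0) :
    ∃ C > 0, ∀ j k : ℕ, 2 ^ (j + 2) ≤ k → k < 2 ^ (j + 3) → ∀ f : (Fin d → ℤ) → ℝ,
      (∑' n, ‖f n‖ₑ ^ 2 ≠ ⊤) →
      ∑' n, Mk k (fun x ↦ f x - conv f (PsiJK (fun x ↦ ψ x) j k) x) n ^ 2 ≤
        .ofReal (C * (k : ℝ) ^ (-(3 / 2) : ℝ)) * ∑' n, ‖f n‖ₑ ^ 2 := by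
  obtain ⟨C₁, hC₁, sq_Mk_le⟩ := exists_tsum_sq_Mk_le hd
  obtain ⟨C₂, hC₂, multiplier_le⟩ := exists_gaussEnergy_mul_one_sub_symbol_le hd h_one h_zero
  refine ⟨C₁ * C₂, by positivity, fun j k hjk hkj f hf ↦ ?_⟩
  obtain ⟨F, hF, coeff_F⟩ := exists_memLp_mFourierCoeff_eq (fun n ↦ (f n : ℂ)) (by
    simpa only [ENNReal.toReal_pow, toReal_enorm, Complex.norm_real] using
      ENNReal.summable_toReal hf)
  have hΨ : Summable fun m ↦ ‖(PsiJK (fun x ↦ ψ x) j k m : ℂ)‖ :=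
    summable_norm_psiQL ψ (qlcm_pos j).ne' (by positivity)
  have memLp : MemLp (fun t ↦ (1 - symbol (fun m ↦ (PsiJK (fun x ↦ ψ x) j k m : ℂ)) t) * F t) 2
      volume := by
    simp only [sub_mul, one_mul]
    exact hF.sub (memLp_symbol_mul hΨ hF)
  have norm_f : ∑' n, ‖f n‖ₑ ^ 2 = ∫⁻ t, ‖F t‖ₑ ^ 2 := by
    rw [← tsum_enorm_mFourierCoeff_sq hF, coeff_F]
    simp only [← ofReal_norm, Complex.norm_real]
  calc _ ≤ .ofReal (C₁ * ((2 ^ k) ^ 2 / (2 ^ k) ^ (2 * d))) *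
          ∫⁻ t, gaussEnergy (2 ^ k) t *
            ‖(1 - symbol (fun m ↦ (PsiJK (fun x ↦ ψ x) j k m : ℂ)) t) * F t‖ₑ ^ 2 :=
        sq_Mk_le k memLp (mFourierCoeff_one_sub_symbol_mul hΨ hF coeff_F)
    _ ≤ .ofReal (C₁ * ((2 ^ k) ^ 2 / (2 ^ k) ^ (2 * d))) *
          (.ofReal (C₂ * ((2 ^ k) ^ (2 * d) / (2 ^ k) ^ 2) * (k : ℝ) ^ (-(3 / 2) : ℝ)) *
            ∫⁻ t, ‖F t‖ₑ ^ 2) := by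
        gcongr
        rw [← lintegral_const_mul' _ _ ENNReal.ofReal_ne_top]
        refine lintegral_mono_ae ?_
        filter_upwards [multiplier_le j k hjk hkj] with t ht
        rw [enorm_mul, mul_pow, ← mul_assoc]
        gcongr
    _ = _ := by
        rw [norm_f, ← mul_assoc, ← ENNReal.ofReal_mul (by positivity)]
        congr 2
        field_simp

end ErrorMultiplier

end FourierMultipliers

lemma iSup_sq_le_tsum {ι : Type*} {p : ι → Prop} {a b : ι → ℝ≥0∞}
    (h : ∀ i, p i → a i ^ 2 ≤ b i) : (⨆ (i) (_ : p i), a i) ^ 2 ≤ ∑' i, b i := by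
  rw [← ENNReal.rpow_two, ← ENNReal.le_rpow_inv_iff two_pos]
  refine iSup₂_le fun i hi ↦ ?_
  rw [ENNReal.le_rpow_inv_iff two_pos, ENNReal.rpow_two]
  exact (h i hi).trans (ENNReal.le_tsum i)

lemma tsum_iSup_sq_le {ι X : Type*} {p : ι → Prop} {a : ι → X → ℝ≥0∞} {c : ι → ℝ≥0∞}
    (h : ∀ i, p i → ∑' x, a i x ^ 2 ≤ c i) :
    ∑' x, (⨆ (i) (_ : p i), a i x) ^ 2 ≤ ∑' i, c i := by
  classical
  calc _ ≤ ∑' x, ∑' i, if p i then a i x ^ 2 else 0 :=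
        ENNReal.tsum_le_tsum fun x ↦ iSup_sq_le_tsum fun i hi ↦ (if_pos hi).ge
    _ = ∑' i, ∑' x, if p i then a i x ^ 2 else 0 := ENNReal.tsum_comm
    _ ≤ _ := ENNReal.tsum_le_tsum fun i ↦ by
        split_ifs with hi
        · exact h i hi
        · simp

lemma two_pow_log_bounds {k : ℕ} (hk : 8 ≤ k) :
    2 ^ (Nat.log 2 k - 2 + 2) ≤ k ∧ k < 2 ^ (Nat.log 2 k - 2 + 3) := by
  have : 3 ≤ Nat.log 2 k := Nat.le_log_of_pow_le one_lt_two hk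
  rw [show Nat.log 2 k - 2 + 2 = Nat.log 2 k by lia,
    show Nat.log 2 k - 2 + 3 = Nat.log 2 k + 1 by lia]
  exact ⟨Nat.pow_log_le_self 2 (by lia), Nat.lt_pow_succ_log_self one_lt_two k⟩

theorem error_term_bound_general (d : ℕ) (hd : 5 ≤ d) (ψ : SchwartzMap (Fin d → ℝ) ℝ)
    (h_one : ∀ ξ ∈ cubeQ d, ftR (fun x => ψ x) ξ = 1)
    (h_zero : ∀ ξ ∉ cube2Q d, ftR (fun x => ψ x) ξ = 0) :
    ∃ C : ℝ, 0 < C ∧ ∀ f : (Fin d → ℤ) → ℝ,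
      (∑' n : Fin d → ℤ,
          (⨆ (k : ℕ) (_ : 8 ≤ k),
            Mk k (fun x => f x - conv f (PsiJK (fun x => ψ x) (Nat.log 2 k - 2) k) x) n) ^ 2)
          ^ ((1 : ℝ) / 2)
        ≤ ENNReal.ofReal C * l2norm f := by
  obtain ⟨C, hC, scale_le⟩ := exists_tsum_sq_Mk_sub_conv_le hd h_one h_zero
  set Z : ℝ := ∑' k : ℕ, C * (k : ℝ) ^ (-(3 / 2) : ℝ)
  have hZ : Summable fun k : ℕ ↦ C * (k : ℝ) ^ (-(3 / 2) : ℝ) :=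
    (Real.summable_nat_rpow.2 (by norm_num)).mul_left C
  have hZ_pos : 0 < Z := hZ.tsum_pos (fun k ↦ by positivity) 1 (by simpa using hC)
  refine ⟨√Z, by positivity, fun f ↦ ?_⟩
  change _ ≤ _ * (∑' n, ‖f n‖ₑ ^ 2) ^ ((1 : ℝ) / 2)
  rw [Real.sqrt_eq_rpow, ← ENNReal.ofReal_rpow_of_nonneg hZ_pos.le one_half_pos.le,
    ← ENNReal.mul_rpow_of_nonneg _ _ one_half_pos.le]
  refine ENNReal.rpow_le_rpow ?_ one_half_pos.le
  rcases eq_or_ne (∑' n, ‖f n‖ₑ ^ 2) ⊤ with hf | hf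
  · rw [hf, ENNReal.mul_top (by simpa using hZ_pos)]
    exact le_top
  · rw [ENNReal.ofReal_tsum_of_nonneg (fun k ↦ by positivity) hZ, ← ENNReal.tsum_mul_right]
    exact tsum_iSup_sq_le fun k hk ↦
      scale_le _ k (two_pow_log_bounds hk).1 (two_pow_log_bounds hk).2 f hf

lemma eq_one_and_eq_zero_of_indicator_le {X : Type*} {S T : Set X} {φ : X → ℂ} (hST : S ⊆ T)
    (hφ : ∀ x, (φ x).im = 0 ∧ S.indicator (fun _ ↦ (1 : ℝ)) x ≤ (φ x).re ∧
      (φ x).re ≤ T.indicator (fun _ ↦ (1 : ℝ)) x) :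
    (∀ x ∈ S, φ x = 1) ∧ ∀ x ∉ T, φ x = 0 := by
  refine ⟨fun x hx ↦ ?_, fun x hx ↦ ?_⟩ <;> obtain ⟨im_eq, le_re, re_le⟩ := hφ x
  · rw [Set.indicator_of_mem hx] at le_re
    rw [Set.indicator_of_mem (hST hx)] at re_le
    exact Complex.ext (le_antisymm re_le le_re) im_eq
  · rw [Set.indicator_of_notMem fun h ↦ hx (hST h)] at le_re
    rw [Set.indicator_of_notMem hx] at re_le
    exact Complex.ext (le_antisymm re_le le_re) im_eq

lemma cubeQ_subset_cube2Q (d : ℕ) : cubeQ d ⊆ cube2Q d :=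
  fun _ hξ i ↦ (hξ i).trans (by norm_num)

/-- **Error term in the proof of Theorem 1**: with `J_k = ⌊log₂ k⌋ - 2`,
`‖sup_{k ≥ 8} M_k(f - f * Ψ_{J_k,k})‖₂ ≤ C ‖f‖₂`. -/
theorem error_term_bound (d : ℕ) (hd : 5 ≤ d) (ψ : SchwartzMap (Fin d → ℝ) ℝ)
    (hψ : ∀ ξ : Fin d → ℝ, (ftR (fun x => ψ x) ξ).im = 0 ∧
      Set.indicator (cubeQ d) (fun _ => (1 : ℝ)) ξ ≤ (ftR (fun x => ψ x) ξ).re ∧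
      (ftR (fun x => ψ x) ξ).re ≤ Set.indicator (cube2Q d) (fun _ => (1 : ℝ)) ξ) :
    ∃ C : ℝ, 0 < C ∧ ∀ f : (Fin d → ℤ) → ℝ,
      (∑' n : Fin d → ℤ,
          (⨆ (k : ℕ) (_ : 8 ≤ k),
            Mk k (fun x => f x - conv f (PsiJK (fun x => ψ x) (Nat.log 2 k - 2) k) x) n) ^ 2)
          ^ ((1 : ℝ) / 2)
        ≤ ENNReal.ofReal C * l2norm f := by
  obtain ⟨h_one, h_zero⟩ := eq_one_and_eq_zero_of_indicator_le (cubeQ_subset_cube2Q d) hψ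
  exact error_term_bound_general d hd ψ h_one h_zero
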